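/- Let k and n be positive integers and λ = (λ₁, λ₂, …, λ_m) a partition of n with n ≥ k + λ₂, and set ℓ = n − λ₁ = |λ̄|. Then the number of Kronecker tableaux of length k, initial shape (n) and final shape λ equals f^{λ̄} · Σ_{m₁=0}^{ℓ} [ C(k, m₁) · Σ_{m₂ = ℓ − m₁}^{⌊(k − m₁)/2⌋} C(m₂, ℓ − m₁) · p₂(k − m₁, m₂) ], where C(a,b) denotes a binomial coefficient. -/

import Mathlib

open Finset

namespace KroneckerPaper

/-- A (removable) corner of a Young diagram: a cell with no cell below it nor to its right
(in English notation; equivalently, in French notation, a cell at the right end of its row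
with no cell above it). -/
def IsCorner (μ : YoungDiagram) (c : ℕ × ℕ) : Prop :=
  c ∈ μ ∧ (c.1 + 1, c.2) ∉ μ ∧ (c.1, c.2 + 1) ∉ μ

/-- The *first corner* of a Young diagram: the unique corner lying on a row of maximal
length. -/
def IsFirstCorner (μ : YoungDiagram) (c : ℕ × ℕ) : Prop :=
  IsCorner μ c ∧ μ.rowLen c.1 = μ.rowLen 0

/-- `μ'` is obtained from `μ` by adding one new cell which is a corner of `μ'`. -/
def AddCorner (μ μ' : YoungDiagram) : Prop :=
  ∃ c, IsCorner μ' c ∧ c ∉ μ.cells ∧ μ'.cells = insert c μ.cells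

/-- `μ'` is obtained from `μ` by removing one corner of `μ`. -/
def RemoveCorner (μ μ' : YoungDiagram) : Prop :=
  ∃ c, IsCorner μ c ∧ μ'.cells = μ.cells.erase c

/-- `μ' ≠ μ` *differs from `μ` by the position of a corner*: it is obtained from `μ` by
removing a corner of `μ` and adding a new cell which is a corner of `μ'`. -/
def MoveCorner (μ μ' : YoungDiagram) : Prop :=
  μ' ≠ μ ∧ ∃ c c', IsCorner μ c ∧ IsCorner μ' c' ∧ c' ∉ μ.cells.erase c ∧
    μ'.cells = insert c' (μ.cells.erase c)

/-- The one-row Young diagram `(n)`. -/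
def rowDiagram (n : ℕ) : YoungDiagram :=
  YoungDiagram.ofRowLens [n] (List.pairwise_singleton _ n).sortedGE

/-- The Young diagram obtained by deleting the first (longest) row, i.e. the truncated
partition `λ̄ = (λ₂, …, λ_m)` of `λ = (λ₁, λ₂, …, λ_m)`. -/
def truncate (μ : YoungDiagram) : YoungDiagram where
  cells := (μ.cells.filter fun c => 1 ≤ c.1).image fun c => (c.1 - 1, c.2)
  isLowerSet := by
    rintro ⟨i1, j1⟩ ⟨i2, j2⟩ ⟨hi, hj⟩ h
    simp only [Finset.coe_image, Finset.coe_filter, Set.mem_image, Set.mem_setOf_eq,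
      Finset.mem_coe, YoungDiagram.mem_cells] at h ⊢
    obtain ⟨⟨a, b⟩, ⟨ha, ha1⟩, heq⟩ := h
    simp only [Prod.mk.injEq] at heq
    exact ⟨(i2 + 1, j2), ⟨μ.up_left_mem (by omega) (by omega) ha, by omega⟩, by simp⟩

/-- A *Kronecker tableau* of length `k`, initial shape `μ` and final shape `lam`:
a sequence `μ⁰ = μ, μ¹, …, μ^k = lam` of diagrams such that each `μ^{i+1}` either differs
from `μ^i` by the position of a corner, or equals `μ^i` together with the datum of a
distinguished corner of `μ^{i+1}` other than its first corner. -/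
structure KroneckerTableau (k : ℕ) (μ lam : YoungDiagram) where
  seq : Fin (k + 1) → YoungDiagram
  dist : Fin k → Option (ℕ × ℕ)
  init : seq 0 = μ
  final : seq (Fin.last k) = lam
  step : ∀ i : Fin k,
    (MoveCorner (seq i.castSucc) (seq i.succ) ∧ dist i = none) ∨
    (seq i.succ = seq i.castSucc ∧
      ∃ c, dist i = some c ∧ IsCorner (seq i.succ) c ∧ ¬ IsFirstCorner (seq i.succ) c)

/-- A *partial standard tableau* of shape `α` with labels in `{1, …, k}`: a labelling of the
cells of `α` by pairwise distinct integers of `{1, …, k}` increasing along rows and columns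
(cells outside `α` are labelled `0` by convention). -/
structure PartialST (α : YoungDiagram) (k : ℕ) where
  label : ℕ × ℕ → ℕ
  mem_of_cell : ∀ c ∈ α, label c ∈ Finset.Icc 1 k
  zero_of_not_cell : ∀ c, c ∉ α → label c = 0
  injOn : ∀ c ∈ α, ∀ c' ∈ α, label c = label c' → c = c'
  row_incr : ∀ i j1 j2 : ℕ, j1 < j2 → (i, j2) ∈ α → label (i, j1) < label (i, j2)
  col_incr : ∀ i1 i2 j : ℕ, i1 < i2 → (i2, j) ∈ α → label (i1, j) < label (i2, j)

/-- `f^α`, the number of standard Young tableaux of shape `α`. -/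
noncomputable def fSYT (α : YoungDiagram) : ℕ :=
  Nat.card (PartialST α α.card)

/-- `p₂ n k`: the number of partitions of an `n`-element set into exactly `k` blocks, each of
size at least `2` (associated Stirling numbers of the second kind). -/
noncomputable def p2 (n k : ℕ) : ℕ :=
  Nat.card {P : Finpartition (Finset.univ : Finset (Fin n)) //
    P.parts.card = k ∧ ∀ b ∈ P.parts, 2 ≤ b.card}

/-- Every non-trivial cycle of `π` is *decreasing*: `π x < x` for every element `x` of a
non-trivial cycle which is not the minimum of its cycle. -/
def DecCycles {S : Type*} [LinearOrder S] (π : Equiv.Perm S) : Prop :=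
  ∀ x, π x ≠ x → (∃ y, π.SameCycle x y ∧ y < x) → π x < x

/-- A pair `(T, π)` of a partial standard tableau of shape `α` with labels in `{1, …, k}`
and a permutation `π` of `{1, …, k}` all of whose non-trivial cycles are decreasing, such
that every fixed point of `π` is a label of `T` and every label of `T` is the greatest
element of its cycle in `π`. -/
structure TabPerm (k : ℕ) (α : YoungDiagram) where
  T : PartialST α k
  π : Equiv.Perm ℕ
  perm_of : ∀ x : ℕ, x ∉ Finset.Icc 1 k → π x = x
  dec : DecCycles π
  fix_mem : ∀ x ∈ Finset.Icc 1 k, π x = x → ∃ c ∈ α, T.label c = x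
  label_max : ∀ c ∈ α, ∀ y : ℕ, π.SameCycle (T.label c) y → y ≤ T.label c



/-! ### Diagrams of a given size -/

noncomputable instance : DecidableEq YoungDiagram := Classical.decEq _

theorem card_eq (μ : YoungDiagram) : μ.card = #μ.cells := rfl

theorem le_iff (μ ν : YoungDiagram) : μ ≤ ν ↔ ∀ c, c ∈ μ → c ∈ ν := Iff.rfl

theorem yd_ext {μ ν : YoungDiagram} (h : ∀ c, c ∈ μ ↔ c ∈ ν) : μ = ν := SetLike.ext h

theorem lt_card_of_mem {μ : YoungDiagram} {i j : ℕ} (h : (i, j) ∈ μ) :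
    i < μ.card ∧ j < μ.card := by
  constructor
  · have h1 : (range (i + 1)).image (fun x => (x, j)) ⊆ μ.cells := by
      intro c hc
      simp only [Finset.mem_image, Finset.mem_range] at hc
      obtain ⟨x, hx, rfl⟩ := hc
      exact μ.up_left_mem (by omega) le_rfl h
    have h2 := card_le_card h1
    rw [card_image_of_injective _ (fun a b hab => by simpa using hab), card_range] at h2
    exact h2
  · have h1 : (range (j + 1)).image (fun x => (i, x)) ⊆ μ.cells := by
      intro c hc
      simp only [Finset.mem_image, Finset.mem_range] at hc
      obtain ⟨x, hx, rfl⟩ := hc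
      exact μ.up_left_mem le_rfl (by omega) h
    have h2 := card_le_card h1
    rw [card_image_of_injective _ (fun a b hab => by simpa using hab), card_range] at h2
    exact h2

theorem finite_card (n : ℕ) : {μ : YoungDiagram | μ.card = n}.Finite := by
  apply Set.Finite.subset (s := YoungDiagram.cells ⁻¹'
    (((range n ×ˢ range n).powerset : Finset (Finset (ℕ × ℕ))) : Set (Finset (ℕ × ℕ))))
  · apply Set.Finite.preimage _ (Finset.finite_toSet _)
    intro a _ b _ h
    exact YoungDiagram.ext h
  · intro μ hμ
    have hμ' : μ.card = n := hμ
    simp only [Set.mem_preimage, Finset.mem_coe, Finset.mem_powerset]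
    rintro ⟨i, j⟩ hc
    have := lt_card_of_mem ((YoungDiagram.mem_cells _).1 hc)
    simp only [mem_product, Finset.mem_range]
    omega

/-- The finite set of Young diagrams with `n` cells. -/
noncomputable def Yd (n : ℕ) : Finset YoungDiagram := (finite_card n).toFinset

@[simp] theorem mem_Yd {n : ℕ} {μ : YoungDiagram} : μ ∈ Yd n ↔ μ.card = n := by
  simp [Yd]

theorem card_le_of_le {μ ν : YoungDiagram} (h : μ ≤ ν) : μ.card ≤ ν.card :=
  card_le_card (YoungDiagram.cells_subset_iff.2 h)

theorem eq_of_le_of_card {μ ν : YoungDiagram} (h : μ ≤ ν) (hc : ν.card ≤ μ.card) : μ = ν :=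
  YoungDiagram.ext (Finset.eq_of_subset_of_card_le (YoungDiagram.cells_subset_iff.2 h) hc)

theorem card_sup_inf (μ ν : YoungDiagram) : (μ ⊔ ν).card + (μ ⊓ ν).card = μ.card + ν.card := by
  simp only [card_eq, YoungDiagram.cells_sup, YoungDiagram.cells_inf]
  exact card_union_add_card_inter _ _

/-- A cover is given by adding one cell. -/
theorem exists_cell {μ ν : YoungDiagram} (h : ν ≤ μ) (hc : μ.card = ν.card + 1) :
    ∃ c, c ∈ μ ∧ c ∉ ν ∧ ∀ d, d ∈ μ ↔ d = c ∨ d ∈ ν := by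
  have hs := YoungDiagram.cells_subset_iff.2 h
  have h1 : #(μ.cells \ ν.cells) = 1 := by
    rw [card_sdiff_of_subset hs]
    simp only [card_eq] at hc
    omega
  obtain ⟨c, hcc⟩ := card_eq_one.1 h1
  have h2 : ∀ d, (d ∈ μ ∧ d ∉ ν) ↔ d = c := by
    intro d
    have := Finset.ext_iff.1 hcc d
    simpa using this
  refine ⟨c, ((h2 c).2 rfl).1, ((h2 c).2 rfl).2, fun d => ?_⟩
  have := h2 d
  have h3 := h (x := d)
  tauto

theorem isCorner_of_cover {μ ν : YoungDiagram} {c : ℕ × ℕ} (hc : c ∉ ν)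
    (h : ∀ d, d ∈ μ ↔ d = c ∨ d ∈ ν) : IsCorner μ c := by
  obtain ⟨i, j⟩ := c
  refine ⟨(h _).2 (Or.inl rfl), ?_, ?_⟩
  · intro h1
    rcases (h _).1 h1 with h2 | h2
    · simp at h2
    · exact hc (ν.up_left_mem (by simp) (by simp) h2)
  · intro h1
    rcases (h _).1 h1 with h2 | h2
    · simp at h2
    · exact hc (ν.up_left_mem (by simp) (by simp) h2)

/-- Remove a corner. -/
def remC (μ : YoungDiagram) (c : ℕ × ℕ) (h : IsCorner μ c) : YoungDiagram where
  cells := μ.cells.erase c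
  isLowerSet := by
    rintro ⟨i1, j1⟩ ⟨i2, j2⟩ ⟨hi, hj⟩ hm
    obtain ⟨i, j⟩ := c
    obtain ⟨hc, h1, h2⟩ := h
    simp only [Finset.coe_erase, Set.mem_sdiff, Finset.mem_coe, YoungDiagram.mem_cells,
      Set.mem_singleton_iff, Prod.mk.injEq] at hm ⊢
    simp only at hi hj h1 h2
    refine ⟨μ.up_left_mem hi hj hm.1, ?_⟩
    rintro ⟨rfl, rfl⟩
    rcases Nat.lt_or_ge i2 i1 with h3 | h3
    · exact h1 (μ.up_left_mem h3 hj hm.1)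
    · have : i1 = i2 := le_antisymm h3 hi
      subst this
      rcases Nat.lt_or_ge j2 j1 with h4 | h4
      · exact h2 (μ.up_left_mem le_rfl h4 hm.1)
      · exact hm.2 ⟨rfl, le_antisymm h4 hj⟩

theorem mem_remC {μ : YoungDiagram} {c : ℕ × ℕ} {h : IsCorner μ c} {d : ℕ × ℕ} :
    d ∈ remC μ c h ↔ d ≠ c ∧ d ∈ μ := by
  rw [← YoungDiagram.mem_cells, ← YoungDiagram.mem_cells]
  exact Finset.mem_erase

theorem card_remC {μ : YoungDiagram} {c : ℕ × ℕ} (h : IsCorner μ c) :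
    (remC μ c h).card + 1 = μ.card :=
  Finset.card_erase_add_one h.1

/-- Add a cell at the end of a row. -/
def addC (μ : YoungDiagram) (i : ℕ) (h : i = 0 ∨ μ.rowLen i < μ.rowLen (i - 1)) :
    YoungDiagram where
  cells := insert (i, μ.rowLen i) μ.cells
  isLowerSet := by
    rintro ⟨i1, j1⟩ ⟨i2, j2⟩ ⟨hi, hj⟩ hm
    simp only [Finset.coe_insert, Set.mem_insert_iff, Finset.mem_coe, YoungDiagram.mem_cells,
      Prod.mk.injEq] at hm ⊢
    simp only at hi hj
    rcases hm with ⟨rfl, rfl⟩ | hm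
    · rcases Nat.lt_or_ge i2 i1 with h3 | h3
      · right
        rcases h with h | h
        · omega
        · rw [YoungDiagram.mem_iff_lt_rowLen]
          have := μ.rowLen_anti i2 (i1 - 1) (by omega)
          omega
      · have : i1 = i2 := le_antisymm h3 hi
        subst this
        rw [YoungDiagram.mem_iff_lt_rowLen]
        omega
    · right
      exact μ.up_left_mem hi hj hm

theorem mem_addC {μ : YoungDiagram} {i : ℕ} {h} {d : ℕ × ℕ} :
    d ∈ addC μ i h ↔ d = (i, μ.rowLen i) ∨ d ∈ μ := by
  rw [← YoungDiagram.mem_cells, ← YoungDiagram.mem_cells]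
  exact Finset.mem_insert

theorem card_addC {μ : YoungDiagram} {i : ℕ} (h) : (addC μ i h).card = μ.card + 1 := by
  apply Finset.card_insert_of_notMem
  rw [YoungDiagram.mem_cells, YoungDiagram.mem_iff_lt_rowLen]
  omega

open Classical in
/-- Lower covers. -/
noncomputable def Dn (μ : YoungDiagram) (m : ℕ) : Finset YoungDiagram := (Yd m).filter (· ≤ μ)

open Classical in
/-- Upper covers. -/
noncomputable def Upp (μ : YoungDiagram) (m : ℕ) : Finset YoungDiagram := (Yd m).filter (μ ≤ ·)

theorem mem_Dn {μ ν : YoungDiagram} {m : ℕ} : ν ∈ Dn μ m ↔ ν.card = m ∧ ν ≤ μ := by simp [Dn]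
theorem mem_Upp {μ ν : YoungDiagram} {m : ℕ} : ν ∈ Upp μ m ↔ ν.card = m ∧ μ ≤ ν := by simp [Upp]

open Classical in
/-- The finite set of corners. -/
noncomputable def corners (μ : YoungDiagram) : Finset (ℕ × ℕ) := μ.cells.filter (IsCorner μ)

theorem mem_corners {μ : YoungDiagram} {c : ℕ × ℕ} : c ∈ corners μ ↔ IsCorner μ c := by
  simp only [corners, Finset.mem_filter, YoungDiagram.mem_cells, and_iff_right_iff_imp]
  exact fun h => h.1

theorem isCorner_iff {μ : YoungDiagram} {i j : ℕ} :
    IsCorner μ (i, j) ↔ μ.rowLen i = j + 1 ∧ μ.rowLen (i + 1) ≤ j := by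
  simp only [IsCorner, YoungDiagram.mem_iff_lt_rowLen]
  omega

theorem card_Dn {μ : YoungDiagram} {m : ℕ} (h : μ.card = m + 1) : #(Dn μ m) = #(corners μ) := by
  symm
  refine Finset.card_bij (fun c hc => remC μ c (mem_corners.1 hc)) ?_ ?_ ?_
  · intro c hc
    rw [mem_Dn]
    have := card_remC (mem_corners.1 hc)
    exact ⟨by omega, fun d hd => (mem_remC.1 hd).2⟩
  · intro c hc d hd hcd
    by_contra hne
    have : c ∈ remC μ d (mem_corners.1 hd) := mem_remC.2 ⟨hne, (mem_corners.1 hc).1⟩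
    rw [← hcd, mem_remC] at this
    exact this.1 rfl
  · intro ν hν
    rw [mem_Dn] at hν
    obtain ⟨c, hc, hcn, hd⟩ := exists_cell hν.2 (by omega)
    refine ⟨c, mem_corners.2 (isCorner_of_cover hcn hd), ?_⟩
    apply yd_ext
    intro d
    rw [mem_remC, hd]
    constructor
    · tauto
    · intro h1
      exact ⟨fun h2 => hcn (h2 ▸ h1), Or.inr h1⟩

theorem card_Upp {μ : YoungDiagram} {m : ℕ} (h : μ.card = m) :
    #(Upp μ (m + 1)) = #(corners μ) + 1 := by
  rw [← Finset.card_insertNone]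
  symm
  have key : ∀ o ∈ insertNone (corners μ),
      (o.elim 0 (fun c => c.1 + 1) = 0 ∨ μ.rowLen (o.elim 0 (fun c => c.1 + 1)) <
        μ.rowLen (o.elim 0 (fun c => c.1 + 1) - 1)) := by
    intro o ho
    rcases o with _ | ⟨i, j⟩
    · simp
    · right
      have h1 : IsCorner μ (i, j) := mem_corners.1 (Finset.mem_insertNone.1 ho _ rfl)
      rw [isCorner_iff] at h1
      simp
      omega
  refine Finset.card_bij (fun o ho => addC μ (o.elim 0 (fun c => c.1 + 1)) (key o ho)) ?_ ?_ ?_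
  · intro o ho
    rw [mem_Upp, card_addC]
    exact ⟨by omega, fun d hd => mem_addC.2 (Or.inr hd)⟩
  · intro o ho o' ho' heq
    have h1 : (o.elim 0 (fun c => c.1 + 1), μ.rowLen (o.elim 0 (fun c => c.1 + 1))) ∈
        addC μ _ (key o' ho') := by
      rw [← heq, mem_addC]; left; rfl
    rw [mem_addC] at h1
    rcases h1 with h1 | h1
    · have h2 := (Prod.mk.injEq _ _ _ _ ▸ h1).1
      rcases o with _ | ⟨i, j⟩ <;> rcases o' with _ | ⟨i', j'⟩
      · rfl
      · simp at h2
      · simp at h2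
      · have h3 : IsCorner μ (i, j) := mem_corners.1 (Finset.mem_insertNone.1 ho _ rfl)
        have h4 : IsCorner μ (i', j') := mem_corners.1 (Finset.mem_insertNone.1 ho' _ rfl)
        rw [isCorner_iff] at h3 h4
        simp only [Option.elim_some, Nat.add_right_cancel_iff] at h2
        subst h2
        have : j = j' := by omega
        rw [this]
    · rw [YoungDiagram.mem_iff_lt_rowLen] at h1
      omega
  · intro ν hν
    rw [mem_Upp] at hν
    obtain ⟨⟨i, j⟩, hc, hcn, hd⟩ := exists_cell hν.2 (by omega)
    have h1 := isCorner_of_cover hcn hd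
    have hj : μ.rowLen i = j := by
      apply le_antisymm
      · rw [YoungDiagram.mem_iff_lt_rowLen] at hcn
        omega
      · by_contra hlt
        have h2 : (i, μ.rowLen i) ∈ ν := ν.up_left_mem le_rfl (by omega) hc
        rcases (hd _).1 h2 with h3 | h3
        · simp at h3; omega
        · rw [YoungDiagram.mem_iff_lt_rowLen] at h3; omega
    rcases i with _ | i
    · refine ⟨none, by simp, ?_⟩
      apply yd_ext
      intro d
      rw [mem_addC, hd]
      simp [hj]
    · have h2 : (i, j) ∈ ν := ν.up_left_mem (by omega) le_rfl hc
      have h3 : (i, j) ∈ μ := by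
        rcases (hd _).1 h2 with h3 | h3
        · simp at h3
        · exact h3
      rw [YoungDiagram.mem_iff_lt_rowLen] at h3
      refine ⟨some (i, μ.rowLen i - 1), ?_, ?_⟩
      · rw [Finset.some_mem_insertNone, mem_corners, isCorner_iff]
        omega
      · apply yd_ext
        intro d
        rw [mem_addC, hd]
        simp [hj]

/-! ### Commutation -/

theorem card_common {γ γ' : YoungDiagram} {m : ℕ} (h : γ.card = m + 1) (h' : γ'.card = m + 1)
    (hne : γ ≠ γ') : #(Upp γ (m + 2) ∩ Upp γ' (m + 2)) = #(Dn γ m ∩ Dn γ' m) := by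
  have hs := card_sup_inf γ γ'
  have h1 : m + 1 < (γ ⊔ γ').card := by
    by_contra hlt
    have e1 := eq_of_le_of_card (le_sup_left : γ ≤ γ ⊔ γ') (by omega)
    have e2 := eq_of_le_of_card (le_sup_right : γ' ≤ γ ⊔ γ') (by omega)
    exact hne (e1.trans e2.symm)
  by_cases hc : (γ ⊔ γ').card = m + 2
  · have e1 : Upp γ (m + 2) ∩ Upp γ' (m + 2) = {γ ⊔ γ'} := by
      ext β
      simp only [Finset.mem_inter, mem_Upp, Finset.mem_singleton]
      constructor
      · rintro ⟨⟨a, b⟩, -, c⟩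
        exact (eq_of_le_of_card (sup_le b c) (by omega)).symm
      · rintro rfl
        exact ⟨⟨hc, le_sup_left⟩, hc, le_sup_right⟩
    have e2 : Dn γ m ∩ Dn γ' m = {γ ⊓ γ'} := by
      ext β
      simp only [Finset.mem_inter, mem_Dn, Finset.mem_singleton]
      constructor
      · rintro ⟨⟨a, b⟩, -, c⟩
        exact (eq_of_le_of_card (le_inf b c) (by omega))
      · rintro rfl
        exact ⟨⟨by omega, inf_le_left⟩, by omega, inf_le_right⟩
    rw [e1, e2]; simp
  · have e1 : Upp γ (m + 2) ∩ Upp γ' (m + 2) = ∅ := by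
      ext β
      simp only [Finset.mem_inter, mem_Upp, Finset.notMem_empty, iff_false]
      rintro ⟨⟨a, b⟩, -, c⟩
      have := card_le_of_le (sup_le b c)
      omega
    have e2 : Dn γ m ∩ Dn γ' m = ∅ := by
      ext β
      simp only [Finset.mem_inter, mem_Dn, Finset.notMem_empty, iff_false]
      rintro ⟨⟨a, b⟩, -, c⟩
      have := card_le_of_le (le_inf b c)
      omega
    rw [e1, e2]

theorem card_common_all {γ γ' : YoungDiagram} {m : ℕ} (h : γ.card = m + 1)
    (h' : γ'.card = m + 1) :
    #(Upp γ (m + 2) ∩ Upp γ' (m + 2)) = #(Dn γ m ∩ Dn γ' m) + if γ = γ' then 1 else 0 := by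
  by_cases hne : γ = γ'
  · subst hne
    simp only [Finset.inter_self, if_true]
    rw [card_Upp h, card_Dn h]
  · rw [card_common h h' hne]; simp [hne]

/-! ### The numbers of standard tableaux -/

theorem PartialST.ext' {α : YoungDiagram} {k : ℕ} {S T : PartialST α k}
    (h : ∀ c ∈ α, S.label c = T.label c) : S = T := by
  have : S.label = T.label := by
    funext c
    by_cases hc : c ∈ α
    · exact h c hc
    · rw [S.zero_of_not_cell c hc, T.zero_of_not_cell c hc]
  cases S; cases T
  simp only at this
  subst this
  rfl

instance (α : YoungDiagram) (k : ℕ) : Finite (PartialST α k) := by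
  have h : ∀ (T : PartialST α k) (c : α.cells), T.label c.1 < k + 1 := by
    intro T c
    have := T.mem_of_cell c.1 ((YoungDiagram.mem_cells _).1 c.2)
    rw [Finset.mem_Icc] at this
    omega
  refine Finite.of_injective
    (fun (T : PartialST α k) (c : α.cells) => (⟨T.label c.1, h T c⟩ : Fin (k + 1))) ?_
  intro S T hST
  apply PartialST.ext'
  intro c hc
  have := congrFun hST ⟨c, (YoungDiagram.mem_cells _).2 hc⟩
  simpa using this

/-- Extend a tableau by one cell with the greatest label. -/
def extendST {α γ : YoungDiagram} {m : ℕ} (h : γ ≤ α) (hα : α.card = m + 1) (hγ : γ.card = m)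
    (T : PartialST γ m) : PartialST α (m + 1) where
  label d := if d ∈ γ then T.label d else if d ∈ α then m + 1 else 0
  mem_of_cell := by
    intro d hd
    have := T.mem_of_cell d
    simp only [Finset.mem_Icc] at this ⊢
    split_ifs with h1
    · have := this h1; omega
    · omega
  zero_of_not_cell := by
    intro d hd
    have : d ∉ γ := fun h1 => hd (h h1)
    simp [this, hd]
  injOn := by
    obtain ⟨c, hc, hcn, hcd⟩ := exists_cell h (by omega)
    intro d hd e he hde
    have h1 := T.mem_of_cell d
    have h2 := T.mem_of_cell e
    simp only [Finset.mem_Icc] at h1 h2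
    rw [if_pos hd, if_pos he] at hde
    split_ifs at hde with h3 h4 h4
    · exact T.injOn d h3 e h4 hde
    · have := h1 h3; omega
    · have := h2 h4; omega
    · have := (hcd d).1 hd
      have := (hcd e).1 he
      rcases (hcd d).1 hd with rfl | h5
      · rcases (hcd e).1 he with rfl | h6
        · rfl
        · exact absurd h6 h4
      · exact absurd h5 h3
  row_incr := by
    obtain ⟨c, hc, hcn, hcd⟩ := exists_cell h (by omega)
    intro i j1 j2 hj hd
    have hd1 : (i, j1) ∈ α := α.up_left_mem le_rfl hj.le hd
    have h1 := T.mem_of_cell (i, j1)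
    simp only [Finset.mem_Icc] at h1
    rw [if_pos hd, if_pos hd1]
    split_ifs with h3 h4 h4
    · exact T.row_incr i j1 j2 hj h4
    · have := h1 h3; omega
    · exact absurd (γ.up_left_mem le_rfl hj.le h4) h3
    · rcases (hcd _).1 hd with h5 | h5
      · rcases (hcd _).1 hd1 with h6 | h6
        · have := h5.trans h6.symm
          simp at this; omega
        · exact absurd h6 h3
      · exact absurd h5 h4
  col_incr := by
    obtain ⟨c, hc, hcn, hcd⟩ := exists_cell h (by omega)
    intro i1 i2 j hj hd
    have hd1 : (i1, j) ∈ α := α.up_left_mem hj.le le_rfl hd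
    have h1 := T.mem_of_cell (i1, j)
    simp only [Finset.mem_Icc] at h1
    rw [if_pos hd, if_pos hd1]
    split_ifs with h3 h4 h4
    · exact T.col_incr i1 i2 j hj h4
    · have := h1 h3; omega
    · exact absurd (γ.up_left_mem hj.le le_rfl h4) h3
    · rcases (hcd _).1 hd with h5 | h5
      · rcases (hcd _).1 hd1 with h6 | h6
        · have := h5.trans h6.symm
          simp at this; omega
        · exact absurd h6 h3
      · exact absurd h5 h4

theorem extendST_le_iff {α γ : YoungDiagram} {m : ℕ} (h : γ ≤ α) (hα : α.card = m + 1)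
    (hγ : γ.card = m) (T : PartialST γ m) (d : ℕ × ℕ) :
    d ∈ γ ↔ d ∈ α ∧ (extendST h hα hγ T).label d ≤ m := by
  have h1 := T.mem_of_cell d
  simp only [Finset.mem_Icc] at h1
  simp only [extendST]
  by_cases h2 : d ∈ γ
  · simp [h2, h h2, h1 h2]
  · by_cases h3 : d ∈ α <;> simp [h2, h3]

theorem restrict_exists {α : YoungDiagram} {m : ℕ} (hα : α.card = m + 1)
    (S : PartialST α (m + 1)) : ∃ (γ : YoungDiagram) (h : γ ≤ α) (hγ : γ.card = m)
      (T : PartialST γ m), extendST h hα hγ T = S := by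
  have himg : α.cells.image S.label = Finset.Icc 1 (m + 1) := by
    apply Finset.eq_of_subset_of_card_le
    · intro x hx
      rw [Finset.mem_image] at hx
      obtain ⟨c, hc, rfl⟩ := hx
      exact S.mem_of_cell c hc
    · rw [Finset.card_image_of_injOn]
      · simp only [Nat.card_Icc]
        rw [card_eq] at hα
        omega
      · intro c hc d hd hcd
        exact S.injOn c hc d hd hcd
  have h1 : m + 1 ∈ α.cells.image S.label := by rw [himg]; simp
  rw [Finset.mem_image] at h1
  obtain ⟨⟨i, j⟩, hc, hcl⟩ := h1
  have hcor : IsCorner α (i, j) := by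
    refine ⟨hc, ?_, ?_⟩
    · intro h2
      have h3 := S.col_incr i (i + 1) j (by omega) h2
      have h4 := S.mem_of_cell _ h2
      rw [Finset.mem_Icc] at h4
      simp only at h4
      omega
    · intro h2
      have h3 := S.row_incr i j (j + 1) (by omega) h2
      have h4 := S.mem_of_cell _ h2
      rw [Finset.mem_Icc] at h4
      simp only at h4
      omega
  have hle : remC α (i, j) hcor ≤ α := fun d hd => (mem_remC.1 hd).2
  have hcd := card_remC hcor
  refine ⟨remC α (i, j) hcor, hle, by omega, ?_, ?_⟩
  · exact {
      label := fun d => if d ∈ remC α (i, j) hcor then S.label d else 0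
      mem_of_cell := by
        intro d hd
        rw [if_pos hd]
        have h3 := S.mem_of_cell d (hle hd)
        rw [Finset.mem_Icc] at h3 ⊢
        have : S.label d ≠ m + 1 := fun h4 =>
          (mem_remC.1 hd).1 (S.injOn d (hle hd) _ hc (h4.trans hcl.symm))
        omega
      zero_of_not_cell := by intro d hd; rw [if_neg hd]
      injOn := by
        intro d hd e he hde
        rw [if_pos hd, if_pos he] at hde
        exact S.injOn d (hle hd) e (hle he) hde
      row_incr := by
        intro a b c h2 h3
        rw [if_pos h3, if_pos (YoungDiagram.up_left_mem _ le_rfl h2.le h3)]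
        exact S.row_incr a b c h2 (hle h3)
      col_incr := by
        intro a b c h2 h3
        rw [if_pos h3, if_pos (YoungDiagram.up_left_mem _ h2.le le_rfl h3)]
        exact S.col_incr a b c h2 (hle h3) }
  · apply PartialST.ext'
    intro d hd
    simp only [extendST]
    by_cases h2 : d ∈ remC α (i, j) hcor
    · simp [h2]
    · have h3 : d = (i, j) := by
        by_contra h4
        exact h2 (mem_remC.2 ⟨h4, hd⟩)
      rw [if_neg h2, if_pos hd, h3, hcl]

theorem fSYT_rec {α : YoungDiagram} {m : ℕ} (hα : α.card = m + 1) :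
    fSYT α = ∑ γ ∈ Dn α m, fSYT γ := by
  have h1 : Nat.card (PartialST α (m + 1)) =
      Nat.card (Σ γ : {γ // γ ∈ Dn α m}, PartialST γ.1 m) := by
    symm
    refine Nat.card_eq_of_bijective (fun p => extendST (mem_Dn.1 p.1.2).2 hα (mem_Dn.1 p.1.2).1 p.2)
      ⟨?_, ?_⟩
    · rintro ⟨⟨γ, hγ⟩, T⟩ ⟨⟨γ', hγ'⟩, T'⟩ heq
      simp only at heq
      have e : γ = γ' := by
        apply yd_ext
        intro d
        rw [extendST_le_iff (mem_Dn.1 hγ).2 hα (mem_Dn.1 hγ).1 T, heq,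
          ← extendST_le_iff (mem_Dn.1 hγ').2 hα (mem_Dn.1 hγ').1 T']
      subst e
      have : T = T' := by
        apply PartialST.ext'
        intro c hc
        have h2 := congrArg (fun S => PartialST.label S c) heq
        simpa [extendST, hc] using h2
      rw [this]
    · intro S
      obtain ⟨γ, h, hγ, T, hT⟩ := restrict_exists hα S
      exact ⟨⟨⟨γ, mem_Dn.2 ⟨hγ, h⟩⟩, T⟩, hT⟩
  rw [fSYT, hα, h1, Nat.card_sigma, ← Finset.sum_coe_sort (Dn α m) fSYT]
  apply Finset.sum_congr rfl
  rintro ⟨γ, hγ⟩ -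
  rw [fSYT, (mem_Dn.1 hγ).1]

theorem eq_bot_of_card {μ : YoungDiagram} (h : μ.card = 0) : μ = ⊥ := by
  apply YoungDiagram.ext
  rw [YoungDiagram.cells_bot]
  exact Finset.card_eq_zero.1 h

theorem card_bot : (⊥ : YoungDiagram).card = 0 := by
  rw [card_eq, YoungDiagram.cells_bot, Finset.card_empty]

theorem fSYT_bot : fSYT ⊥ = 1 := by
  rw [fSYT, Nat.card_eq_one_iff_unique]
  constructor
  · constructor
    intro S T
    apply PartialST.ext'
    intro c hc
    exact absurd hc (YoungDiagram.notMem_bot c)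
  · exact ⟨⟨fun _ => 0, by simp, by simp, by simp, by simp, by simp⟩⟩

theorem Dn_zero (μ : YoungDiagram) : Dn μ 0 = {⊥} := by
  ext ν
  rw [mem_Dn, Finset.mem_singleton]
  constructor
  · exact fun h => eq_bot_of_card h.1
  · rintro rfl; exact ⟨card_bot, bot_le⟩

theorem corners_bot : corners ⊥ = ∅ := by
  ext c
  rw [mem_corners]
  simp [IsCorner]

/-- Exchange of summation: down-up sums. -/
theorem sum_up_down (γ : YoungDiagram) (a b : ℕ) (F : YoungDiagram → ℕ) :
    ∑ β ∈ Upp γ b, ∑ δ ∈ Dn β a, F δ = ∑ δ ∈ Yd a, #(Upp γ b ∩ Upp δ b) * F δ := by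
  have : ∀ β ∈ Upp γ b, ∑ δ ∈ Dn β a, F δ = ∑ δ ∈ Yd a, if β ∈ Upp δ b then F δ else 0 := by
    intro β hβ
    rw [← Finset.sum_filter]
    apply Finset.sum_congr _ (fun _ _ => rfl)
    ext δ
    simp [mem_Dn, mem_Upp, (mem_Upp.1 hβ).1]
  rw [Finset.sum_congr rfl this, Finset.sum_comm]
  apply Finset.sum_congr rfl
  intro δ _
  rw [← Finset.sum_filter, Finset.sum_const, smul_eq_mul, Finset.filter_mem_eq_inter]

theorem sum_down_up (γ : YoungDiagram) (a b : ℕ) (F : YoungDiagram → ℕ) :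
    ∑ β ∈ Dn γ b, ∑ δ ∈ Upp β a, F δ = ∑ δ ∈ Yd a, #(Dn γ b ∩ Dn δ b) * F δ := by
  have : ∀ β ∈ Dn γ b, ∑ δ ∈ Upp β a, F δ = ∑ δ ∈ Yd a, if β ∈ Dn δ b then F δ else 0 := by
    intro β hβ
    rw [← Finset.sum_filter]
    apply Finset.sum_congr _ (fun _ _ => rfl)
    ext δ
    simp [mem_Dn, mem_Upp, (mem_Dn.1 hβ).1]
  rw [Finset.sum_congr rfl this, Finset.sum_comm]
  apply Finset.sum_congr rfl
  intro δ _
  rw [← Finset.sum_filter, Finset.sum_const, smul_eq_mul, Finset.filter_mem_eq_inter]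

theorem fSYT_up (m : ℕ) : ∀ γ : YoungDiagram, γ.card = m →
    ∑ β ∈ Upp γ (m + 1), fSYT β = (m + 1) * fSYT γ := by
  induction m with
  | zero =>
    intro γ hγ
    have e := eq_bot_of_card hγ
    subst e
    have h1 : ∀ β ∈ Upp ⊥ (0 + 1), fSYT β = 1 := by
      intro β hβ
      rw [fSYT_rec (m := 0) (mem_Upp.1 hβ).1, Dn_zero, Finset.sum_singleton, fSYT_bot]
    rw [Finset.sum_congr rfl h1, Finset.sum_const, card_Upp hγ, corners_bot, fSYT_bot]
    simp
  | succ m ih =>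
    intro γ hγ
    have h1 : ∀ β ∈ Upp γ (m + 2), fSYT β = ∑ δ ∈ Dn β (m + 1), fSYT δ := fun β hβ =>
      fSYT_rec (mem_Upp.1 hβ).1
    rw [Finset.sum_congr rfl h1, sum_up_down]
    have h2 : ∀ δ ∈ Yd (m + 1), #(Upp γ (m + 2) ∩ Upp δ (m + 2)) * fSYT δ =
        #(Dn γ m ∩ Dn δ m) * fSYT δ + if γ = δ then fSYT δ else 0 := by
      intro δ hδ
      rw [card_common_all hγ (mem_Yd.1 hδ), add_mul]
      congr 1
      split_ifs <;> simp
    rw [Finset.sum_congr rfl h2, Finset.sum_add_distrib, ← sum_down_up, Finset.sum_ite_eq,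
      if_pos (mem_Yd.2 hγ)]
    have h3 : ∀ β ∈ Dn γ m, ∑ δ ∈ Upp β (m + 1), fSYT δ = (m + 1) * fSYT β := fun β hβ =>
      ih β (mem_Dn.1 hβ).1
    rw [Finset.sum_congr rfl h3, ← Finset.mul_sum, ← fSYT_rec hγ]
    ring

/-! ### Truncation -/

theorem mem_truncate {μ : YoungDiagram} {i j : ℕ} : (i, j) ∈ truncate μ ↔ (i + 1, j) ∈ μ := by
  rw [← YoungDiagram.mem_cells, ← YoungDiagram.mem_cells]
  simp only [truncate, Finset.mem_image, Finset.mem_filter, Prod.mk.injEq, Prod.exists]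
  constructor
  · rintro ⟨a, b, ⟨h1, h2⟩, h3, rfl⟩
    have : a = i + 1 := by omega
    subst this
    exact h1
  · intro h
    exact ⟨i + 1, j, ⟨h, by omega⟩, by omega, rfl⟩

theorem rowLen_eq_of {μ : YoungDiagram} {i a : ℕ} (h : ∀ j, (i, j) ∈ μ ↔ j < a) :
    μ.rowLen i = a := by
  have h1 : ∀ j, j < μ.rowLen i ↔ j < a := fun j => by
    rw [← YoungDiagram.mem_iff_lt_rowLen, h]
  have := h1 a
  have := h1 (μ.rowLen i)
  omega

theorem rowLen_truncate (μ : YoungDiagram) (i : ℕ) :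
    (truncate μ).rowLen i = μ.rowLen (i + 1) := by
  apply rowLen_eq_of
  intro j
  rw [mem_truncate, YoungDiagram.mem_iff_lt_rowLen]

theorem le_iff_rowLen {μ ν : YoungDiagram} : μ ≤ ν ↔ ∀ i, μ.rowLen i ≤ ν.rowLen i := by
  rw [le_iff]
  constructor
  · intro h i
    by_contra hlt
    have := h (i, ν.rowLen i) (YoungDiagram.mem_iff_lt_rowLen.2 (by omega))
    rw [YoungDiagram.mem_iff_lt_rowLen] at this
    omega
  · rintro h ⟨i, j⟩ hc
    rw [YoungDiagram.mem_iff_lt_rowLen] at hc ⊢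
    exact lt_of_lt_of_le hc (h i)

theorem le_iff_trunc {μ ν : YoungDiagram} :
    μ ≤ ν ↔ truncate μ ≤ truncate ν ∧ μ.rowLen 0 ≤ ν.rowLen 0 := by
  simp only [le_iff_rowLen, rowLen_truncate]
  constructor
  · exact fun h => ⟨fun i => h _, h 0⟩
  · rintro ⟨h1, h2⟩ i
    cases i
    · exact h2
    · exact h1 _

theorem eq_iff_trunc {μ ν : YoungDiagram} :
    μ = ν ↔ truncate μ = truncate ν ∧ μ.rowLen 0 = ν.rowLen 0 := by
  constructor
  · rintro rfl; exact ⟨rfl, rfl⟩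
  · rintro ⟨h1, h2⟩
    exact le_antisymm (le_iff_trunc.2 ⟨h1.le, h2.le⟩) (le_iff_trunc.2 ⟨h1.ge, h2.ge⟩)

theorem card_trunc (μ : YoungDiagram) : μ.card = (truncate μ).card + μ.rowLen 0 := by
  have h1 : (truncate μ).card = #(μ.cells.filter fun c => 1 ≤ c.1) := by
    apply Finset.card_image_of_injOn
    rintro ⟨a, b⟩ h ⟨c, d⟩ h' he
    simp only [Finset.coe_filter, Set.mem_ofPred_eq] at h h'
    simp only [Prod.mk.injEq] at he ⊢
    omega
  have h2 : μ.rowLen 0 = #(μ.cells.filter fun c => ¬ 1 ≤ c.1) := by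
    rw [YoungDiagram.rowLen_eq_card]
    congr 1
    ext ⟨a, b⟩
    rw [YoungDiagram.mem_row_iff, Finset.mem_filter, YoungDiagram.mem_cells]
    simp
  rw [h1, h2, card_eq, Finset.card_filter_add_card_filter_not]

/-- Add a first row of length `a`. -/
def consRow (α : YoungDiagram) (a : ℕ) (h : α.rowLen 0 ≤ a) : YoungDiagram where
  cells := (range a).image (fun j => (0, j)) ∪ α.cells.image (fun c => (c.1 + 1, c.2))
  isLowerSet := by
    rintro ⟨i1, j1⟩ ⟨i2, j2⟩ ⟨hi, hj⟩ hm
    simp only at hi hj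
    simp only [Finset.coe_union, Finset.coe_image, Set.mem_union, Set.mem_image, Finset.mem_coe,
      Finset.mem_range, Prod.mk.injEq, Prod.exists, YoungDiagram.mem_cells] at hm ⊢
    rcases hm with ⟨x, hx, rfl, rfl⟩ | ⟨x, y, hx, rfl, rfl⟩
    · left; exact ⟨j2, by omega, by omega, rfl⟩
    · rcases i2 with _ | i2
      · left
        refine ⟨j2, ?_, rfl, rfl⟩
        rw [YoungDiagram.mem_iff_lt_rowLen] at hx
        have := α.rowLen_anti 0 x (by omega)
        omega
      · right
        exact ⟨i2, j2, α.up_left_mem (by omega) hj hx, rfl, rfl⟩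

theorem truncate_consRow {α : YoungDiagram} {a : ℕ} (h : α.rowLen 0 ≤ a) :
    truncate (consRow α a h) = α := by
  apply yd_ext
  rintro ⟨i, j⟩
  rw [mem_truncate, ← YoungDiagram.mem_cells]
  simp [consRow]

theorem rowLen_consRow {α : YoungDiagram} {a : ℕ} (h : α.rowLen 0 ≤ a) :
    (consRow α a h).rowLen 0 = a := by
  apply rowLen_eq_of
  intro j
  rw [← YoungDiagram.mem_cells]
  simp [consRow]

theorem card_consRow {α : YoungDiagram} {a : ℕ} (h : α.rowLen 0 ≤ a) :
    (consRow α a h).card = α.card + a := by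
  rw [card_trunc, truncate_consRow, rowLen_consRow]

theorem rowLen_cover {μ ν : YoungDiagram} (h : ν ≤ μ) (hc : μ.card = ν.card + 1) (i : ℕ) :
    μ.rowLen i ≤ ν.rowLen i + 1 := by
  obtain ⟨c, h1, h2, h3⟩ := exists_cell h hc
  by_contra hlt
  have m1 : (i, ν.rowLen i) ∈ μ := YoungDiagram.mem_iff_lt_rowLen.2 (by omega)
  have m2 : (i, ν.rowLen i + 1) ∈ μ := YoungDiagram.mem_iff_lt_rowLen.2 (by omega)
  rw [h3, YoungDiagram.mem_iff_lt_rowLen] at m1 m2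
  have m1' : (i, ν.rowLen i) = c := by
    rcases m1 with m1 | m1
    · exact m1
    · omega
  have m2' : (i, ν.rowLen i + 1) = c := by
    rcases m2 with m2 | m2
    · exact m2
    · omega
  have := m1'.trans m2'.symm
  simp at this

theorem sum_Dn_trunc {lam : YoungDiagram} {m l : ℕ} (hm : lam.card = m + 1)
    (hl : (truncate lam).card = l) (d : ℕ → ℕ)
    (hd : lam.rowLen 0 = lam.rowLen 1 → d l = 0) :
    ∑ ν ∈ Dn lam m, fSYT (truncate ν) * d (truncate ν).card =
      fSYT (truncate lam) * (d l + if l = 0 then 0 else d (l - 1)) := by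
  have hcl := card_trunc lam
  have h10 : lam.rowLen 1 ≤ lam.rowLen 0 := lam.rowLen_anti 0 1 (by omega)
  rw [← Finset.sum_filter_add_sum_filter_not (Dn lam m) (fun ν => (truncate ν).card = l), mul_add]
  congr 1
  · have key : ∀ ν ∈ (Dn lam m).filter (fun ν => (truncate ν).card = l),
        truncate ν = truncate lam := by
      intro ν hν
      rw [Finset.mem_filter, mem_Dn, le_iff_trunc] at hν
      exact eq_of_le_of_card hν.1.2.1 (by omega)
    have h1 : ∀ ν ∈ (Dn lam m).filter (fun ν => (truncate ν).card = l),
        fSYT (truncate ν) * d (truncate ν).card = fSYT (truncate lam) * d l := by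
      intro ν hν
      rw [key ν hν, hl]
    rw [Finset.sum_congr rfl h1, Finset.sum_const, smul_eq_mul]
    by_cases he : lam.rowLen 0 = lam.rowLen 1
    · rw [hd he]; simp
    · have hr : (truncate lam).rowLen 0 ≤ lam.rowLen 0 - 1 := by
        rw [rowLen_truncate]; simp only [zero_add]; omega
      have : (Dn lam m).filter (fun ν => (truncate ν).card = l) =
          {consRow (truncate lam) (lam.rowLen 0 - 1) hr} := by
        apply Finset.eq_singleton_iff_unique_mem.2
        constructor
        · rw [Finset.mem_filter, mem_Dn, le_iff_trunc, card_consRow, truncate_consRow,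
            rowLen_consRow]
          exact ⟨⟨by omega, le_rfl, by omega⟩, hl⟩
        · intro ν hν
          rw [eq_iff_trunc, truncate_consRow, rowLen_consRow]
          have hk := key ν hν
          refine ⟨hk, ?_⟩
          rw [Finset.mem_filter, mem_Dn] at hν
          have := card_trunc ν
          omega
      rw [this, Finset.card_singleton, one_mul]
  · by_cases h0 : l = 0
    · rw [if_pos h0, mul_zero]
      apply Finset.sum_eq_zero
      intro ν hν
      rw [Finset.mem_filter, mem_Dn, le_iff_trunc] at hν
      have := card_le_of_le hν.1.2.1
      omega
    · rw [if_neg h0]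
      obtain ⟨l', rfl⟩ : ∃ l', l = l' + 1 := ⟨l - 1, by omega⟩
      rw [fSYT_rec hl, Finset.sum_mul]
      have key : ∀ ν ∈ (Dn lam m).filter (fun ν => ¬ (truncate ν).card = l' + 1),
          (truncate ν).card = l' ∧ ν.rowLen 0 = lam.rowLen 0 := by
        intro ν hν
        rw [Finset.mem_filter, mem_Dn, le_iff_trunc] at hν
        have h1 := card_le_of_le hν.1.2.1
        have h2 := card_trunc ν
        have h3 := hν.2
        have h4 := hν.1.2.2
        have h5 := hν.1.1
        omega
      refine Finset.sum_bij (fun ν _ => truncate ν) ?_ ?_ ?_ ?_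
      · intro ν hν
        have hk := key ν hν
        rw [Finset.mem_filter, mem_Dn, le_iff_trunc] at hν
        rw [mem_Dn]
        exact ⟨hk.1, hν.1.2.1⟩
      · intro ν hν ν' hν' he
        rw [eq_iff_trunc, (key ν hν).2, (key ν' hν').2]
        exact ⟨he, rfl⟩
      · intro γ hγ
        rw [mem_Dn] at hγ
        have hr : γ.rowLen 0 ≤ lam.rowLen 0 := by
          have := le_iff_rowLen.1 hγ.2 0
          rw [rowLen_truncate] at this
          simp only [zero_add] at this
          omega
        refine ⟨consRow γ (lam.rowLen 0) hr, ?_, truncate_consRow hr⟩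
        rw [Finset.mem_filter, mem_Dn, le_iff_trunc, card_consRow, truncate_consRow,
            rowLen_consRow]
        exact ⟨⟨by omega, hγ.2, le_rfl⟩, by omega⟩
      · intro ν hν
        rw [(key ν hν).1]
        simp

theorem sum_Upp_trunc {ν : YoungDiagram} {m j : ℕ} (hm : ν.card = m)
    (hj : (truncate ν).card = j) (c : ℕ → ℕ)
    (hc : ν.rowLen 0 = ν.rowLen 1 → c (j + 1) = 0) :
    ∑ μ ∈ Upp ν (m + 1), fSYT (truncate μ) * c (truncate μ).card =
      fSYT (truncate ν) * (c j + (j + 1) * c (j + 1)) := by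
  have hcl := card_trunc ν
  have h10 : ν.rowLen 1 ≤ ν.rowLen 0 := ν.rowLen_anti 0 1 (by omega)
  rw [← Finset.sum_filter_add_sum_filter_not (Upp ν (m + 1)) (fun μ => (truncate μ).card = j),
    mul_add]
  congr 1
  · have hr : (truncate ν).rowLen 0 ≤ ν.rowLen 0 + 1 := by
      rw [rowLen_truncate]; simp only [zero_add]; omega
    have : (Upp ν (m + 1)).filter (fun μ => (truncate μ).card = j) =
        {consRow (truncate ν) (ν.rowLen 0 + 1) hr} := by
      apply Finset.eq_singleton_iff_unique_mem.2
      constructor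
      · rw [Finset.mem_filter, mem_Upp, le_iff_trunc, card_consRow, truncate_consRow,
          rowLen_consRow]
        exact ⟨⟨by omega, le_rfl, by omega⟩, hj⟩
      · intro μ hμ
        rw [Finset.mem_filter, mem_Upp, le_iff_trunc] at hμ
        rw [eq_iff_trunc, truncate_consRow, rowLen_consRow]
        refine ⟨(eq_of_le_of_card hμ.1.2.1 (by omega)).symm, ?_⟩
        have := card_trunc μ
        omega
    rw [this, Finset.sum_singleton, truncate_consRow, hj]
  · have key : ∀ μ ∈ (Upp ν (m + 1)).filter (fun μ => ¬ (truncate μ).card = j),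
        (truncate μ).card = j + 1 ∧ μ.rowLen 0 = ν.rowLen 0 := by
      intro μ hμ
      rw [Finset.mem_filter, mem_Upp, le_iff_trunc] at hμ
      have h1 := card_le_of_le hμ.1.2.1
      have h2 := card_trunc μ
      have h3 := hμ.2
      have h4 := hμ.1.2.2
      have h5 := hμ.1.1
      omega
    by_cases he : ν.rowLen 0 = ν.rowLen 1
    · rw [hc he]
      simp only [mul_zero]
      apply Finset.sum_eq_zero
      intro μ hμ
      rw [(key μ hμ).1, hc he, mul_zero]
    · have e : fSYT (truncate ν) * ((j + 1) * c (j + 1)) =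
          ∑ β ∈ Upp (truncate ν) (j + 1), fSYT β * c (j + 1) := by
        rw [← Finset.sum_mul, fSYT_up j _ hj]; ring
      rw [e]
      refine Finset.sum_bij (fun ν _ => truncate ν) ?_ ?_ ?_ ?_
      · intro μ hμ
        have hk := key μ hμ
        rw [Finset.mem_filter, mem_Upp, le_iff_trunc] at hμ
        rw [mem_Upp]
        exact ⟨hk.1, hμ.1.2.1⟩
      · intro μ hμ μ' hμ' he
        rw [eq_iff_trunc, (key μ hμ).2, (key μ' hμ').2]
        exact ⟨he, rfl⟩
      · intro β hβ
        rw [mem_Upp] at hβ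
        have hr : β.rowLen 0 ≤ ν.rowLen 0 := by
          have := rowLen_cover hβ.2 (by omega) 0
          rw [rowLen_truncate] at this
          simp only [zero_add] at this
          omega
        refine ⟨consRow β (ν.rowLen 0) hr, ?_, truncate_consRow hr⟩
        rw [Finset.mem_filter, mem_Upp, le_iff_trunc, card_consRow, truncate_consRow,
            rowLen_consRow]
        exact ⟨⟨by omega, hβ.2, le_rfl⟩, by omega⟩
      · intro μ hμ
        rw [(key μ hμ).1]

/-! ### Kronecker tableaux -/

theorem moveCorner_iff {μ lam : YoungDiagram} {m : ℕ} (h' : lam.card = m + 1) :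
    MoveCorner μ lam ↔ μ ≠ lam ∧ μ.card = m + 1 ∧ (Dn μ m ∩ Dn lam m).Nonempty := by
  constructor
  · rintro ⟨hne, c, c', hc, hc', hn, he⟩
    have h1 := card_remC hc
    have hcells : (remC μ c hc).cells = μ.cells.erase c := rfl
    have h2 : lam.card = (remC μ c hc).card + 1 := by
      rw [card_eq, he, Finset.card_insert_of_notMem hn]; rfl
    refine ⟨hne.symm, by omega, remC μ c hc, ?_⟩
    rw [Finset.mem_inter, mem_Dn, mem_Dn]
    refine ⟨⟨by omega, fun d hd => (mem_remC.1 hd).2⟩, by omega, ?_⟩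
    rw [← YoungDiagram.cells_subset_iff, he, hcells]
    exact Finset.subset_insert _ _
  · rintro ⟨hne, hcard, ν, hν⟩
    rw [Finset.mem_inter, mem_Dn, mem_Dn] at hν
    obtain ⟨c, hc1, hc2, hc3⟩ := exists_cell hν.1.2 (by omega)
    obtain ⟨c', hc1', hc2', hc3'⟩ := exists_cell hν.2.2 (by omega)
    have he : μ.cells.erase c = ν.cells := by
      ext d
      rw [Finset.mem_erase, YoungDiagram.mem_cells, YoungDiagram.mem_cells, hc3]
      constructor
      · tauto
      · intro h1; exact ⟨fun h2 => hc2 (h2 ▸ h1), Or.inr h1⟩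
    refine ⟨hne.symm, c, c', isCorner_of_cover hc2 hc3, isCorner_of_cover hc2' hc3', ?_, ?_⟩
    · rw [he]; exact hc2'
    · rw [he]
      ext d
      rw [Finset.mem_insert, YoungDiagram.mem_cells, YoungDiagram.mem_cells, hc3']

/-- The data of one step of a Kronecker tableau. -/
def StepT (μ lam : YoungDiagram) : Type :=
  {d : Option (ℕ × ℕ) // (MoveCorner μ lam ∧ d = none) ∨
    (lam = μ ∧ ∃ c, d = some c ∧ IsCorner lam c ∧ ¬ IsFirstCorner lam c)}

instance (μ lam : YoungDiagram) : Finite (StepT μ lam) := by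
  apply Set.Finite.subset (s := ((insertNone (corners lam) : Finset _) : Set _))
    (Finset.finite_toSet _)
  rintro d (⟨-, rfl⟩ | ⟨-, c, rfl, h, -⟩)
  · simp
  · simp only [Finset.mem_coe, Finset.some_mem_insertNone]
    exact mem_corners.2 h

theorem exists_firstCorner {lam : YoungDiagram} (h : 0 < lam.card) :
    ∃ c0, ∀ c, IsFirstCorner lam c ↔ c = c0 := by
  have hpos : 0 < lam.rowLen 0 := by
    obtain ⟨⟨i, j⟩, hc⟩ := Finset.card_pos.1 h
    rw [YoungDiagram.mem_cells, YoungDiagram.mem_iff_lt_rowLen] at hc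
    have := lam.rowLen_anti 0 i (by omega)
    omega
  have h0 : (0, lam.rowLen 0 - 1) ∈ lam := YoungDiagram.mem_iff_lt_rowLen.2 (by omega)
  have h00 := h0
  rw [YoungDiagram.mem_iff_lt_colLen] at h0
  have hmem : ∀ i, (i, lam.rowLen 0 - 1) ∈ lam ↔ lam.rowLen i = lam.rowLen 0 := by
    intro i
    rw [YoungDiagram.mem_iff_lt_rowLen]
    have := lam.rowLen_anti 0 i (by omega)
    omega
  refine ⟨(lam.colLen (lam.rowLen 0 - 1) - 1, lam.rowLen 0 - 1), ?_⟩
  rintro ⟨i, j⟩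
  simp only [IsFirstCorner, Prod.mk.injEq]
  rw [isCorner_iff, ← hmem, YoungDiagram.mem_iff_lt_colLen]
  have hi1 := hmem (i + 1)
  have hi := hmem i
  rw [YoungDiagram.mem_iff_lt_colLen] at hi hi1
  have a1 := lam.rowLen_anti 0 i (by omega)
  have a2 := lam.rowLen_anti 0 (i + 1) (by omega)
  constructor
  · rintro ⟨⟨h1, h2⟩, h3⟩
    have := hi.1 h3
    have : ¬ (i + 1 < lam.colLen (lam.rowLen 0 - 1)) := fun h4 => by
      have := hi1.1 h4; omega
    omega
  · rintro ⟨h1, h2⟩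
    have h3 : i < lam.colLen (lam.rowLen 0 - 1) := by omega
    have := hi.1 h3
    have : ¬ lam.rowLen (i + 1) = lam.rowLen 0 := fun h4 => by
      have := hi1.2 h4; omega
    omega

theorem card_StepT {μ lam : YoungDiagram} {m : ℕ} (h : μ.card = m + 1) (h' : lam.card = m + 1) :
    Nat.card (StepT μ lam) + (if μ = lam then 1 else 0) = #(Dn μ m ∩ Dn lam m) := by
  by_cases hne : μ = lam
  · subst hne
    rw [if_pos rfl, Finset.inter_self, card_Dn h]
    obtain ⟨c0, hc0⟩ := exists_firstCorner (lam := μ) (by omega)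
    have hc0c : c0 ∈ corners μ := mem_corners.2 ((hc0 c0).2 rfl).1
    have e : Nat.card (StepT μ μ) = Nat.card {c // c ∈ (corners μ).erase c0} := by
      symm
      refine Nat.card_eq_of_bijective (fun c => ⟨some c.1, Or.inr ⟨rfl, c.1, rfl, ?_, ?_⟩⟩)
        ⟨?_, ?_⟩
      · exact mem_corners.1 (Finset.mem_of_mem_erase c.2)
      · rw [hc0]; exact Finset.ne_of_mem_erase c.2
      · rintro ⟨c, hc⟩ ⟨d, hd⟩ hcd
        have := congrArg Subtype.val hcd
        simpa using this
      · rintro ⟨d, hd⟩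
        rcases hd with ⟨hm, -⟩ | ⟨-, c, rfl, hc, hf⟩
        · exact absurd rfl hm.1
        · rw [hc0] at hf
          exact ⟨⟨c, Finset.mem_erase.2 ⟨hf, mem_corners.2 hc⟩⟩, rfl⟩
    rw [e, Nat.card_eq_fintype_card, Fintype.card_coe, Finset.card_erase_add_one hc0c]
  · rw [if_neg hne, add_zero]
    by_cases hm : MoveCorner μ lam
    · have h1 := ((moveCorner_iff h').1 hm).2.2
      have h2 : Nat.card (StepT μ lam) = 1 := by
        rw [Nat.card_eq_one_iff_unique]
        refine ⟨⟨?_⟩, ⟨⟨none, Or.inl ⟨hm, rfl⟩⟩⟩⟩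
        rintro ⟨d, hd⟩ ⟨d', hd'⟩
        have a : d = none := by
          rcases hd with hd | hd
          · exact hd.2
          · exact absurd hd.1.symm hne
        have b : d' = none := by
          rcases hd' with hd | hd
          · exact hd.2
          · exact absurd hd.1.symm hne
        exact Subtype.ext (a.trans b.symm)
      rw [h2]
      apply le_antisymm (Finset.card_pos.2 h1)
      rw [Finset.card_le_one]
      have key : ∀ a ∈ Dn μ m ∩ Dn lam m, a = μ ⊓ lam := by
        intro a ha
        rw [Finset.mem_inter, mem_Dn, mem_Dn] at ha
        apply eq_of_le_of_card (le_inf ha.1.2 ha.2.2)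
        by_contra hlt
        have e1 := eq_of_le_of_card (inf_le_left : μ ⊓ lam ≤ μ) (by omega)
        have e2 := eq_of_le_of_card (inf_le_right : μ ⊓ lam ≤ lam) (by omega)
        exact hne (e1.symm.trans e2)
      intro a ha b hb
      rw [key a ha, key b hb]
    · have h1 : Dn μ m ∩ Dn lam m = ∅ := by
        rw [← Finset.not_nonempty_iff_eq_empty]
        exact fun h1 => hm ((moveCorner_iff h').2 ⟨hne, h, h1⟩)
      rw [h1, Finset.card_empty, Nat.card_eq_zero]
      left
      constructor
      rintro ⟨d, hd | hd⟩
      · exact hm hd.1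
      · exact hne hd.1.symm

theorem KT_ext {k : ℕ} {μ lam : YoungDiagram} {S T : KroneckerTableau k μ lam}
    (h1 : S.seq = T.seq) (h2 : S.dist = T.dist) : S = T := by
  cases S; cases T
  simp only at h1 h2
  subst h1 h2
  rfl

theorem stepT_card {μ lam : YoungDiagram} {n : ℕ} (hl : lam.card = n) (hn : 1 ≤ n)
    (s : StepT μ lam) : μ.card = n := by
  obtain ⟨m, rfl⟩ : ∃ m, n = m + 1 := ⟨n - 1, by omega⟩
  obtain ⟨d, h | h⟩ := s
  · exact ((moveCorner_iff hl).1 h.1).2.1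
  · rw [← h.1, hl]

/-- Append a step. -/
def KT_snoc {k : ℕ} {μ μ' lam : YoungDiagram} (S : KroneckerTableau k μ μ') (s : StepT μ' lam) :
    KroneckerTableau (k + 1) μ lam where
  seq := Fin.snoc (α := fun _ => YoungDiagram) S.seq lam
  dist := Fin.snoc (α := fun _ => Option (ℕ × ℕ)) S.dist s.1
  init := by
    rw [← Fin.castSucc_zero, Fin.snoc_castSucc]
    exact S.init
  final := by rw [Fin.snoc_last]
  step := by
    intro i
    refine Fin.lastCases ?_ (fun i => ?_) i
    · rw [Fin.succ_last, Fin.snoc_last, Fin.snoc_last, Fin.snoc_castSucc, S.final]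
      exact s.2
    · rw [Fin.succ_castSucc, Fin.snoc_castSucc, Fin.snoc_castSucc, Fin.snoc_castSucc]
      exact S.step i

theorem KT_snoc_surj {k : ℕ} {μ lam : YoungDiagram} (S : KroneckerTableau (k + 1) μ lam) :
    ∃ (μ' : YoungDiagram) (T : KroneckerTableau k μ μ') (s : StepT μ' lam), KT_snoc T s = S := by
  have hlast := S.step (Fin.last k)
  rw [Fin.succ_last, S.final] at hlast
  refine ⟨S.seq (Fin.last k).castSucc,
    ⟨fun i => S.seq i.castSucc, fun i => S.dist i.castSucc, S.init, rfl, ?_⟩,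
    ⟨S.dist (Fin.last k), hlast⟩, ?_⟩
  · intro i
    have := S.step i.castSucc
    rw [Fin.succ_castSucc] at this
    exact this
  · apply KT_ext
    · funext i
      refine Fin.lastCases ?_ (fun i => ?_) i
      · simp only [KT_snoc]
        rw [Fin.snoc_last, S.final]
      · simp only [KT_snoc]
        rw [Fin.snoc_castSucc]
    · funext i
      refine Fin.lastCases ?_ (fun i => ?_) i
      · simp only [KT_snoc]
        rw [Fin.snoc_last]
      · simp only [KT_snoc]
        rw [Fin.snoc_castSucc]

theorem KT_snoc_bij {k n : ℕ} {μ lam : YoungDiagram} (hl : lam.card = n) (hn : 1 ≤ n) :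
    Function.Bijective (fun p : (Σ μ' : {x // x ∈ Yd n}, KroneckerTableau k μ μ'.1 × StepT μ'.1 lam)
      => KT_snoc p.2.1 p.2.2) := by
  constructor
  · rintro ⟨⟨μ1, h1⟩, S1, s1⟩ ⟨⟨μ2, h2⟩, S2, s2⟩ heq
    simp only at heq
    have hseq := congrArg KroneckerTableau.seq heq
    have hdist := congrArg KroneckerTableau.dist heq
    simp only [KT_snoc] at hseq hdist
    rw [Fin.snoc_inj] at hseq hdist
    have e : μ1 = μ2 := by
      have a1 := S1.final
      have a2 := S2.final
      rw [hseq.1] at a1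
      exact a1.symm.trans a2
    subst e
    have e1 : S1 = S2 := KT_ext hseq.1 hdist.1
    have e2 : s1 = s2 := Subtype.ext hdist.2
    rw [e1, e2]
  · intro S
    obtain ⟨μ', T, s, h⟩ := KT_snoc_surj S
    exact ⟨⟨⟨μ', mem_Yd.2 (stepT_card hl hn s)⟩, T, s⟩, h⟩

theorem KT_zero_card (μ lam : YoungDiagram) :
    Nat.card (KroneckerTableau 0 μ lam) = if μ = lam then 1 else 0 := by
  split_ifs with h
  · subst h
    rw [Nat.card_eq_one_iff_unique]
    refine ⟨⟨?_⟩, ⟨⟨fun _ => μ, fun _ => none, rfl, rfl, fun i => i.elim0⟩⟩⟩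
    intro S T
    apply KT_ext
    · funext i
      have hi : i = 0 := by ext; simp
      rw [hi, S.init, T.init]
    · funext i
      exact i.elim0
  · rw [Nat.card_eq_zero]
    left
    constructor
    intro S
    apply h
    exact S.init.symm.trans S.final

theorem KT_finite (k n : ℕ) (hn : 1 ≤ n) (μ : YoungDiagram) : ∀ lam : YoungDiagram, lam.card = n →
    Finite (KroneckerTableau k μ lam) := by
  induction k with
  | zero =>
    intro lam _
    by_contra h
    rw [not_finite_iff_infinite] at h
    have h1 : ∀ S T : KroneckerTableau 0 μ lam, S = T := by
      intro S T
      apply KT_ext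
      · funext i
        have hi : i = 0 := by ext; simp
        rw [hi, S.init, T.init]
      · funext i
        exact i.elim0
    have : Subsingleton (KroneckerTableau 0 μ lam) := ⟨h1⟩
    exact not_finite (KroneckerTableau 0 μ lam)
  | succ k ih =>
    intro lam hl
    have : ∀ μ' : {x // x ∈ Yd n}, Finite (KroneckerTableau k μ μ'.1) := fun μ' =>
      ih μ'.1 (mem_Yd.1 μ'.2)
    exact Finite.of_surjective _ (KT_snoc_bij (k := k) (μ := μ) hl hn).2

theorem KT_succ_card {k m : ℕ} {μ lam : YoungDiagram} (hl : lam.card = m + 1) :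
    Nat.card (KroneckerTableau (k + 1) μ lam) + Nat.card (KroneckerTableau k μ lam) =
      ∑ ν ∈ Dn lam m, ∑ μ' ∈ Upp ν (m + 1), Nat.card (KroneckerTableau k μ μ') := by
  have : ∀ μ' : {x // x ∈ Yd (m + 1)}, Finite (KroneckerTableau k μ μ'.1) := fun μ' =>
      KT_finite k (m + 1) (by omega) μ μ'.1 (mem_Yd.1 μ'.2)
  rw [← Nat.card_eq_of_bijective _ (KT_snoc_bij (k := k) (μ := μ) hl (by omega)), Nat.card_sigma,
    sum_down_up]
  simp only [Nat.card_prod]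
  rw [Finset.sum_coe_sort (Yd (m + 1))
    (fun μ' => Nat.card (KroneckerTableau k μ μ') * Nat.card (StepT μ' lam))]
  have h2 : Nat.card (KroneckerTableau k μ lam) =
      ∑ μ' ∈ Yd (m + 1), if μ' = lam then Nat.card (KroneckerTableau k μ μ') else 0 := by
    rw [Finset.sum_ite_eq', if_pos (mem_Yd.2 hl)]
  rw [h2, ← Finset.sum_add_distrib]
  apply Finset.sum_congr rfl
  intro μ' hμ'
  rw [Finset.inter_comm, ← card_StepT (mem_Yd.1 hμ') hl]
  split_ifs <;> ring

/-! ### Associated Stirling numbers -/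

section Stirling

variable {α : Type*} [DecidableEq α]

/-- `p` is (the set of blocks of) a partition of `s` into blocks of size at least two. -/
def Gp (s : Finset α) (p : Finset (Finset α)) : Prop :=
  (∀ b ∈ p, 2 ≤ #b) ∧ (∀ b ∈ p, ∀ b' ∈ p, ∀ x ∈ b, x ∈ b' → b = b') ∧
    (∀ x, x ∈ s ↔ ∃ b ∈ p, x ∈ b)

open Classical in
/-- The finite set of partitions of `s` into `k` blocks of size at least two. -/
noncomputable def PF (s : Finset α) (k : ℕ) : Finset (Finset (Finset α)) :=
  s.powerset.powerset.filter (fun p => Gp s p ∧ #p = k)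

theorem mem_PF {s : Finset α} {k : ℕ} {p : Finset (Finset α)} :
    p ∈ PF s k ↔ Gp s p ∧ #p = k := by
  simp only [PF, Finset.mem_filter, and_iff_right_iff_imp]
  rintro ⟨⟨h1, h2, h3⟩, -⟩
  rw [Finset.mem_powerset]
  intro b hb
  rw [Finset.mem_powerset]
  intro x hx
  exact (h3 x).2 ⟨b, hb, hx⟩

open Classical in
theorem PF_card_pair {s : Finset α} {a : α} (ha : a ∉ s) (k : ℕ) :
    #((PF (insert a s) (k + 1)).filter (fun p => ∃ b, b ≠ a ∧ {a, b} ∈ p)) =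
      ∑ b ∈ s, #(PF (s.erase b) k) := by
  rw [← Finset.card_sigma]
  symm
  have nota : ∀ b ∈ s, ∀ q ∈ PF (s.erase b) k, ∀ B ∈ q, a ∉ B ∧ b ∉ B := by
    intro b hb q hq B hB
    rw [mem_PF] at hq
    constructor
    · intro h
      have := (hq.1.2.2 a).2 ⟨B, hB, h⟩
      exact ha (Finset.mem_of_mem_erase this)
    · intro h
      have := (hq.1.2.2 b).2 ⟨B, hB, h⟩
      exact Finset.notMem_erase _ _ this
  refine Finset.card_bij (fun x _ => insert {a, x.1} x.2) ?_ ?_ ?_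
  · rintro ⟨b, q⟩ hx
    rw [Finset.mem_sigma] at hx
    obtain ⟨hb, hq⟩ := hx
    simp only at hb hq
    have hba : b ≠ a := fun h => ha (h ▸ hb)
    have hn := nota b hb q hq
    rw [mem_PF] at hq
    obtain ⟨⟨h1, h2, h3⟩, h4⟩ := hq
    rw [Finset.mem_filter, mem_PF]
    refine ⟨⟨⟨?_, ?_, ?_⟩, ?_⟩, b, hba, Finset.mem_insert_self _ _⟩
    · intro B hB
      rcases Finset.mem_insert.1 hB with rfl | hB
      · rw [Finset.card_pair hba.symm]
      · exact h1 B hB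
    · intro B hB B' hB' x hx hx'
      rcases Finset.mem_insert.1 hB with rfl | hB <;> rcases Finset.mem_insert.1 hB' with rfl | hB'
      · rfl
      · have := hn B' hB'
        simp only [Finset.mem_insert, Finset.mem_singleton] at hx
        rcases hx with rfl | rfl <;> tauto
      · have := hn B hB
        simp only [Finset.mem_insert, Finset.mem_singleton] at hx'
        rcases hx' with rfl | rfl <;> tauto
      · exact h2 B hB B' hB' x hx hx'
    · intro x
      have := h3 x
      rw [Finset.mem_erase] at this
      simp only [Finset.mem_insert, exists_eq_or_imp, ← this, Finset.mem_singleton]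
      constructor
      · rintro (h | h)
        · tauto
        · by_cases hxb : x = b <;> tauto
      · rintro ((h | h) | h)
        · tauto
        · subst h; tauto
        · tauto
    · rw [Finset.card_insert_of_notMem, h4]
      intro h
      exact (hn _ h).1 (Finset.mem_insert_self _ _)
  · rintro ⟨b, q⟩ hx ⟨b', q'⟩ hx' heq
    rw [Finset.mem_sigma] at hx hx'
    simp only at hx hx' heq
    have hn := nota b hx.1 q hx.2
    have hn' := nota b' hx'.1 q' hx'.2
    have hba : b ≠ a := fun h => ha (h ▸ hx.1)
    have hbb : b = b' := by
      have h1 : ({a, b} : Finset α) ∈ insert {a, b'} q' := by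
        rw [← heq]; exact Finset.mem_insert_self _ _
      rcases Finset.mem_insert.1 h1 with h1 | h1
      · have : b ∈ ({a, b'} : Finset α) := by rw [← h1]; simp
        simp only [Finset.mem_insert, Finset.mem_singleton] at this
        tauto
      · exact absurd (Finset.mem_insert_self _ _) (hn' _ h1).1
    subst hbb
    have n1 : ({a, b} : Finset α) ∉ q := fun h => (hn _ h).1 (Finset.mem_insert_self _ _)
    have n2 : ({a, b} : Finset α) ∉ q' := fun h => (hn' _ h).1 (Finset.mem_insert_self _ _)
    have : q = q' := by
      rw [← Finset.erase_insert n1, heq, Finset.erase_insert n2]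
    rw [this]
  · intro p hp
    rw [Finset.mem_filter, mem_PF] at hp
    obtain ⟨⟨⟨h1, h2, h3⟩, h4⟩, b, hba, hp⟩ := hp
    have hbs : b ∈ s := by
      have := (h3 b).2 ⟨_, hp, by simp⟩
      exact Finset.mem_of_mem_insert_of_ne this hba
    refine ⟨⟨b, p.erase {a, b}⟩, ?_, Finset.insert_erase hp⟩
    rw [Finset.mem_sigma, mem_PF]
    refine ⟨hbs, ⟨?_, ?_, ?_⟩, ?_⟩
    · intro B hB
      exact h1 B (Finset.mem_of_mem_erase hB)
    · intro B hB B' hB'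
      exact h2 B (Finset.mem_of_mem_erase hB) B' (Finset.mem_of_mem_erase hB')
    · intro x
      simp only [Finset.mem_erase]
      constructor
      · rintro ⟨hxb, hxs⟩
        obtain ⟨B, hB, hxB⟩ := (h3 x).1 (Finset.mem_insert_of_mem hxs)
        refine ⟨B, ⟨?_, hB⟩, hxB⟩
        rintro rfl
        simp only [Finset.mem_insert, Finset.mem_singleton] at hxB
        rcases hxB with rfl | rfl
        · exact ha hxs
        · exact hxb rfl
      · rintro ⟨B, ⟨hne, hB⟩, hxB⟩
        have hx := (h3 x).2 ⟨B, hB, hxB⟩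
        have hxb : x ≠ b := by
          rintro rfl
          exact hne (h2 B hB _ hp x hxB (by simp))
        have hxa : x ≠ a := by
          rintro rfl
          exact hne (h2 B hB _ hp x hxB (by simp))
        exact ⟨hxb, Finset.mem_of_mem_insert_of_ne hx hxa⟩
    · simp only
      rw [Finset.card_erase_of_mem hp, h4]; rfl

open Classical in
theorem PF_card_big {s : Finset α} {a : α} (ha : a ∉ s) (k : ℕ) :
    #((PF (insert a s) (k + 1)).filter (fun p => ¬ ∃ b, b ≠ a ∧ {a, b} ∈ p)) =
      (k + 1) * #(PF s (k + 1)) := by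
  have hsum : (k + 1) * #(PF s (k + 1)) = ∑ q ∈ PF s (k + 1), #q := by
    rw [Finset.sum_congr rfl (fun q hq => (mem_PF.1 hq).2), Finset.sum_const, smul_eq_mul, mul_comm]
  rw [hsum, ← Finset.card_sigma]
  symm
  have nota : ∀ q ∈ PF s (k + 1), ∀ B ∈ q, a ∉ B := by
    intro q hq B hB h
    rw [mem_PF] at hq
    exact ha ((hq.1.2.2 a).2 ⟨B, hB, h⟩)
  refine Finset.card_bij (fun x _ => insert (insert a x.2) (x.1.erase x.2)) ?_ ?_ ?_
  · rintro ⟨q, B⟩ hx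
    rw [Finset.mem_sigma] at hx
    obtain ⟨hq, hB⟩ := hx
    simp only at hB hq
    have hn := nota q hq
    rw [mem_PF] at hq
    obtain ⟨⟨h1, h2, h3⟩, h4⟩ := hq
    rw [Finset.mem_filter, mem_PF]
    refine ⟨⟨⟨?_, ?_, ?_⟩, ?_⟩, ?_⟩
    · intro C hC
      rcases Finset.mem_insert.1 hC with rfl | hC
      · rw [Finset.card_insert_of_notMem (hn B hB)]
        have := h1 B hB
        omega
      · exact h1 C (Finset.mem_of_mem_erase hC)
    · intro C hC C' hC' x hx hx'
      rcases Finset.mem_insert.1 hC with rfl | hC <;> rcases Finset.mem_insert.1 hC' with rfl | hC'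
      · rfl
      · obtain ⟨n1, n2⟩ := Finset.mem_erase.1 hC'
        rcases Finset.mem_insert.1 hx with hxa | hx
        · exact absurd (hxa ▸ hx') (hn _ n2)
        · exact absurd (h2 C' n2 B hB x hx' hx) n1
      · obtain ⟨n1, n2⟩ := Finset.mem_erase.1 hC
        rcases Finset.mem_insert.1 hx' with hxa | hx'
        · exact absurd (hxa ▸ hx) (hn _ n2)
        · exact absurd (h2 C n2 B hB x hx hx') n1
      · exact h2 C (Finset.mem_of_mem_erase hC) C' (Finset.mem_of_mem_erase hC') x hx hx'
    · intro x
      rw [Finset.mem_insert, h3]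
      simp only [Finset.mem_insert, exists_eq_or_imp, Finset.mem_erase]
      constructor
      · rintro (h | ⟨C, hC, hx⟩)
        · tauto
        · by_cases hCB : C = B
          · subst hCB; tauto
          · right; exact ⟨C, ⟨hCB, hC⟩, hx⟩
      · rintro ((h | h) | ⟨C, hC, hx⟩)
        · tauto
        · right; exact ⟨B, hB, h⟩
        · right; exact ⟨C, hC.2, hx⟩
    · rw [Finset.card_insert_of_notMem, Finset.card_erase_of_mem hB, h4]
      · rfl
      · intro h
        exact hn _ (Finset.mem_of_mem_erase h) (Finset.mem_insert_self _ _)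
    · rintro ⟨b, hba, hb⟩
      rcases Finset.mem_insert.1 hb with hb | hb
      · have e1 := Finset.card_insert_of_notMem (hn B hB)
        rw [← hb, Finset.card_pair hba.symm] at e1
        have := h1 B hB
        omega
      · exact hn _ (Finset.mem_of_mem_erase hb) (Finset.mem_insert_self _ _)
  · rintro ⟨q, B⟩ hx ⟨q', B'⟩ hx' heq
    rw [Finset.mem_sigma] at hx hx'
    simp only at hx hx' heq
    have hn := nota q hx.1
    have hn' := nota q' hx'.1
    have e : insert a B = insert a B' := by
      have h1 : insert a B ∈ insert (insert a B') (q'.erase B') := by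
        rw [← heq]; exact Finset.mem_insert_self _ _
      rcases Finset.mem_insert.1 h1 with h1 | h1
      · exact h1
      · exact absurd (Finset.mem_insert_self _ _) (hn' _ (Finset.mem_of_mem_erase h1))
    have hBB : B = B' := by
      rw [← Finset.erase_insert (hn B hx.2), e, Finset.erase_insert (hn' B' hx'.2)]
    subst hBB
    have n1 : insert a B ∉ q.erase B := fun h =>
      hn _ (Finset.mem_of_mem_erase h) (Finset.mem_insert_self _ _)
    have n2 : insert a B ∉ q'.erase B := fun h =>
      hn' _ (Finset.mem_of_mem_erase h) (Finset.mem_insert_self _ _)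
    have e2 : q.erase B = q'.erase B := by
      rw [← Finset.erase_insert n1, heq, Finset.erase_insert n2]
    have : q = q' := by
      rw [← Finset.insert_erase hx.2, e2, Finset.insert_erase hx'.2]
    rw [this]
  · intro p hp
    rw [Finset.mem_filter, mem_PF] at hp
    obtain ⟨⟨⟨h1, h2, h3⟩, h4⟩, hno⟩ := hp
    obtain ⟨C, hC, haC⟩ := (h3 a).1 (Finset.mem_insert_self _ _)
    have hcard : 3 ≤ #C := by
      have := h1 C hC
      by_contra hlt
      have h5 : #(C.erase a) = 1 := by
        rw [Finset.card_erase_of_mem haC]; omega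
      obtain ⟨b, hb⟩ := Finset.card_eq_one.1 h5
      have h6 : b ∈ C.erase a := by rw [hb]; simp
      apply hno
      refine ⟨b, Finset.ne_of_mem_erase h6, ?_⟩
      rw [← hb, Finset.insert_erase haC]
      exact hC
    have hCe : #(C.erase a) + 1 = #C := Finset.card_erase_add_one haC
    have hnp : C.erase a ∉ p.erase C := by
      intro h
      rw [Finset.mem_erase] at h
      obtain ⟨y, hy⟩ := Finset.card_pos.1 (show 0 < #(C.erase a) by omega)
      exact h.1 (h2 _ h.2 C hC y hy (Finset.mem_of_mem_erase hy))
    refine ⟨⟨insert (C.erase a) (p.erase C), C.erase a⟩, ?_, ?_⟩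
    · rw [Finset.mem_sigma, mem_PF]
      refine ⟨⟨⟨?_, ?_, ?_⟩, ?_⟩, Finset.mem_insert_self _ _⟩
      · intro B hB
        rcases Finset.mem_insert.1 hB with rfl | hB
        · omega
        · exact h1 B (Finset.mem_of_mem_erase hB)
      · intro B hB B' hB' x hx hx'
        rcases Finset.mem_insert.1 hB with rfl | hB <;>
          rcases Finset.mem_insert.1 hB' with rfl | hB'
        · rfl
        · rw [Finset.mem_erase] at hB'
          exact absurd (h2 _ hB'.2 C hC x hx' (Finset.mem_of_mem_erase hx)) hB'.1
        · rw [Finset.mem_erase] at hB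
          exact absurd (h2 _ hB.2 C hC x hx (Finset.mem_of_mem_erase hx')) hB.1
        · exact h2 B (Finset.mem_of_mem_erase hB) B' (Finset.mem_of_mem_erase hB') x hx hx'
      · intro x
        simp only [Finset.mem_insert, exists_eq_or_imp, Finset.mem_erase]
        constructor
        · intro hxs
          have hxa : x ≠ a := fun h => ha (h ▸ hxs)
          obtain ⟨B, hB, hxB⟩ := (h3 x).1 (Finset.mem_insert_of_mem hxs)
          by_cases hBC : B = C
          · subst hBC; exact Or.inl ⟨hxa, hxB⟩
          · exact Or.inr ⟨B, ⟨hBC, hB⟩, hxB⟩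
        · rintro (⟨hxa, hx⟩ | ⟨B, ⟨hBC, hB⟩, hxB⟩)
          · exact Finset.mem_of_mem_insert_of_ne ((h3 x).2 ⟨C, hC, hx⟩) hxa
          · have hxa : x ≠ a := by
              rintro rfl
              exact hBC (h2 B hB C hC x hxB haC)
            exact Finset.mem_of_mem_insert_of_ne ((h3 x).2 ⟨B, hB, hxB⟩) hxa
      · rw [Finset.card_insert_of_notMem hnp, Finset.card_erase_of_mem hC, h4]; rfl
    · simp only
      rw [Finset.erase_insert hnp, Finset.insert_erase haC, Finset.insert_erase hC]

open Classical in
theorem PF_card_insert {s : Finset α} {a : α} (ha : a ∉ s) (k : ℕ) :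
    #(PF (insert a s) (k + 1)) = (k + 1) * #(PF s (k + 1)) + ∑ b ∈ s, #(PF (s.erase b) k) := by
  rw [← Finset.card_filter_add_card_filter_not (fun p => ∃ b, b ≠ a ∧ {a, b} ∈ p),
    PF_card_pair ha, PF_card_big ha, add_comm]

theorem PF_zero {s : Finset α} (hs : s.Nonempty) : #(PF s 0) = 0 := by
  rw [Finset.card_eq_zero, Finset.eq_empty_iff_forall_notMem]
  intro p hp
  rw [mem_PF, Finset.card_eq_zero] at hp
  obtain ⟨⟨-, -, h⟩, rfl⟩ := hp
  obtain ⟨x, hx⟩ := hs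
  simpa using (h x).1 hx

theorem PF_empty (k : ℕ) : #(PF (∅ : Finset α) k) = if k = 0 then 1 else 0 := by
  have key : ∀ p, p ∈ PF (∅ : Finset α) k ↔ p = ∅ ∧ k = 0 := by
    intro p
    rw [mem_PF]
    constructor
    · rintro ⟨⟨h1, h2, h3⟩, h4⟩
      have : p = ∅ := by
        rw [Finset.eq_empty_iff_forall_notMem]
        intro b hb
        have h5 := h1 b hb
        obtain ⟨x, hx⟩ := Finset.card_pos.1 (show 0 < #b by omega)
        have := (h3 x).2 ⟨b, hb, hx⟩
        simp at this
      subst this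
      simp at h4
      exact ⟨rfl, h4.symm⟩
    · rintro ⟨rfl, rfl⟩
      simp [Gp]
  split_ifs with h
  · rw [Finset.card_eq_one]
    refine ⟨∅, ?_⟩
    ext p
    rw [key]
    simp [h]
  · rw [Finset.card_eq_zero, Finset.eq_empty_iff_forall_notMem]
    intro p hp
    exact h ((key p).1 hp).2

end Stirling

/-- The recursion of the associated Stirling numbers. -/
def rr : ℕ → ℕ → ℕ
  | 0, 0 => 1
  | 0, _ + 1 => 0
  | 1, _ => 0
  | _ + 2, 0 => 0
  | n + 2, k + 1 => (k + 1) * rr (n + 1) (k + 1) + (n + 1) * rr n k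

theorem PF_card {α : Type*} [DecidableEq α] (n : ℕ) :
    ∀ (s : Finset α) (k : ℕ), #s = n → #(PF s k) = rr n k := by
  induction n using Nat.strong_induction_on with
  | _ n ih =>
    intro s k hs
    rcases n with _ | n
    · rw [Finset.card_eq_zero] at hs
      subst hs
      rw [PF_empty]
      cases k <;> simp [rr]
    · have hne : s.Nonempty := Finset.card_pos.1 (by omega)
      rcases k with _ | k
      · rw [PF_zero hne]
        cases n <;> simp [rr]
      · obtain ⟨a, ha⟩ := hne
        have hi := Finset.insert_erase ha
        have hc : #(s.erase a) = n := by rw [Finset.card_erase_of_mem ha, hs]; rfl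
        rw [← hi, PF_card_insert (Finset.notMem_erase a s), ih n (by omega) _ _ hc]
        rcases n with _ | n
        · rw [Finset.card_eq_zero] at hc
          rw [hc]
          simp [rr]
        · have h2 : ∀ b ∈ s.erase a, #(PF ((s.erase a).erase b) k) = rr n k := by
            intro b hb
            apply ih n (by omega)
            rw [Finset.card_erase_of_mem hb, hc]; rfl
          rw [Finset.sum_congr rfl h2, Finset.sum_const, hc, smul_eq_mul]
          simp [rr]

theorem p2_eq (n k : ℕ) : p2 n k = rr n k := by
  rw [← PF_card n (Finset.univ : Finset (Fin n)) k (by simp), p2, ← Fintype.card_coe,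
    ← Nat.card_eq_fintype_card]
  refine Nat.card_eq_of_bijective (fun P => ⟨P.1.parts, ?_⟩) ⟨?_, ?_⟩
  · rw [mem_PF]
    refine ⟨⟨P.2.2, ?_, ?_⟩, P.2.1⟩
    · intro b hb b' hb' x hx hx'
      exact P.1.eq_of_mem_parts hb hb' hx hx'
    · intro x
      simp only [Finset.mem_univ, true_iff]
      obtain ⟨b, hb, hx⟩ := P.1.exists_mem (Finset.mem_univ x)
      exact ⟨b, hb, hx⟩
  · rintro ⟨P, hP⟩ ⟨Q, hQ⟩ h
    simp only [Subtype.mk.injEq] at h ⊢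
    exact Finpartition.ext h
  · rintro ⟨p, hp⟩
    have hp' := hp
    rw [mem_PF] at hp'
    obtain ⟨⟨h1, h2, h3⟩, h4⟩ := hp'
    refine ⟨⟨⟨p, ?_, ?_, ?_⟩, h4, h1⟩, rfl⟩
    · rw [Finset.supIndep_iff_pairwiseDisjoint]
      intro b hb b' hb' hne
      simp only [Function.onFun, id]
      rw [Finset.disjoint_left]
      intro x hx hx'
      exact hne (h2 b hb b' hb' x hx hx')
    · ext x
      simp only [Finset.mem_sup, id, Finset.mem_univ, iff_true]
      exact (h3 x).1 (Finset.mem_univ x)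
    · intro hb
      have := h1 _ hb
      simp at this

/-! ### The recursion of the coefficients -/

section Coeffs

open Polynomial

theorem rr_eq_zero : ∀ n k : ℕ, n < 2 * k → rr n k = 0
  | 0, 0, h => by omega
  | 0, _ + 1, _ => by simp [rr]
  | 1, _, _ => by simp [rr]
  | _ + 2, 0, _ => by simp [rr]
  | n + 2, k + 1, h => by
    rw [rr, rr_eq_zero (n + 1) (k + 1) (by omega), rr_eq_zero n k (by omega)]
    simp

/-- Generating polynomial of the associated Stirling numbers. -/
noncomputable def Pp : ℕ → ℤ[X]
  | 0 => 1
  | 1 => 0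
  | n + 2 => X * derivative (Pp (n + 1)) + ((n + 1 : ℕ) : ℤ[X]) * (X * Pp n)

theorem Pp_coeff : ∀ n k : ℕ, (Pp n).coeff k = (rr n k : ℤ)
  | 0, 0 => by simp [Pp, rr]
  | 0, _ + 1 => by simp [Pp, rr, coeff_one]
  | 1, _ => by simp [Pp, rr]
  | _ + 2, 0 => by simp [Pp, rr]
  | n + 2, k + 1 => by
    rw [Pp, coeff_add, coeff_X_mul, coeff_derivative, coeff_natCast_mul, coeff_X_mul,
      Pp_coeff (n + 1) (k + 1), Pp_coeff n k, rr]
    push_cast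
    ring

theorem Pp_eq_sum (n : ℕ) : Pp n = ∑ m ∈ range (n + 1), C (rr n m : ℤ) * X ^ m := by
  ext k
  rw [finsetSum_coeff, Pp_coeff]
  simp only [coeff_C_mul, coeff_X_pow, mul_ite, mul_one, mul_zero]
  rw [Finset.sum_ite_eq]
  split_ifs with h
  · rfl
  · rw [rr_eq_zero]; · rfl
    simp at h
    omega

/-- Shifted polynomial. -/
noncomputable def Sp (n : ℕ) : ℤ[X] := (Pp n).comp (X + 1)

theorem Sp_coeff (n l : ℕ) :
    (Sp n).coeff l = ∑ m ∈ range (n + 1), (rr n m : ℤ) * (m.choose l : ℤ) := by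
  rw [Sp, Pp_eq_sum, Polynomial.sum_comp, finsetSum_coeff]
  apply Finset.sum_congr rfl
  intro m _
  rw [mul_comp, C_comp, pow_comp, X_comp, coeff_C_mul, coeff_X_add_one_pow]

theorem Sp_der (n : ℕ) :
    (X + 1) * derivative (Sp n) = Sp (n + 1) - (n : ℤ[X]) * ((X + 1) * Sp (n - 1)) := by
  rcases n with _ | n
  · simp [Sp, Pp]
  · simp only [Sp, Pp, derivative_comp]
    simp

/-- Generating polynomial of the coefficients. -/
noncomputable def Qp (k : ℕ) : ℤ[X] :=
  ∑ ij ∈ antidiagonal k, (k.choose ij.1 : ℤ[X]) * (X ^ ij.1 * Sp ij.2)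

theorem sum_shift (k : ℕ) :
    ∑ ij ∈ antidiagonal k, (k.choose ij.1 : ℤ[X]) * ((ij.1 : ℤ[X]) * X ^ (ij.1 - 1) * Sp ij.2) =
    ∑ ij ∈ antidiagonal k, (k.choose ij.1 : ℤ[X]) * ((ij.2 : ℤ[X]) * X ^ ij.1 * Sp (ij.2 - 1)) := by
  rcases k with _ | n
  · simp
  · rw [Finset.Nat.sum_antidiagonal_succ, Finset.Nat.sum_antidiagonal_succ']
    simp only [Nat.cast_zero, zero_mul, mul_zero, zero_add, Nat.add_sub_cancel, add_zero]
    apply Finset.sum_congr rfl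
    rintro ⟨i, j⟩ hij
    rw [Finset.HasAntidiagonal.mem_antidiagonal] at hij
    simp only at hij ⊢
    have h1 : ((n + 1).choose (i + 1)) * (i + 1) = ((n + 1).choose i) * (j + 1) := by
      have e1 := Nat.add_one_mul_choose_eq n i
      have e2 := Nat.choose_mul_succ_eq n i
      have : n + 1 - i = j + 1 := by omega
      rw [this] at e2
      linarith
    have h2 := congrArg (Nat.cast (R := ℤ[X])) h1
    push_cast at h2 ⊢
    linear_combination (X ^ i * Sp j) * h2

theorem Qp_der (k : ℕ) : (X + 1) * derivative (Qp k) =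
    ∑ ij ∈ antidiagonal k, (k.choose ij.1 : ℤ[X]) * (X ^ ij.1 * Sp (ij.2 + 1)) := by
  have h : ∀ ij ∈ antidiagonal k, (X + 1) * derivative ((k.choose ij.1 : ℤ[X]) * (X ^ ij.1 * Sp ij.2))
      = (X + 1) * ((k.choose ij.1 : ℤ[X]) * ((ij.1 : ℤ[X]) * X ^ (ij.1 - 1) * Sp ij.2))
        + ((k.choose ij.1 : ℤ[X]) * (X ^ ij.1 * Sp (ij.2 + 1))
        - (X + 1) * ((k.choose ij.1 : ℤ[X]) * ((ij.2 : ℤ[X]) * X ^ ij.1 * Sp (ij.2 - 1)))) := by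
    rintro ⟨i, j⟩ _
    simp only [derivative_mul, derivative_natCast, derivative_X_pow, zero_mul, zero_add]
    have := Sp_der j
    simp only [C_eq_natCast, map_natCast]
    linear_combination ((k.choose i : ℤ[X]) * X ^ i) * this
  rw [Qp, derivative_sum, Finset.mul_sum, Finset.sum_congr rfl h, Finset.sum_add_distrib,
    Finset.sum_sub_distrib, ← Finset.mul_sum, ← Finset.mul_sum, sum_shift]
  ring

theorem Qp_succ (k : ℕ) : Qp (k + 1) = X * Qp k + (X + 1) * derivative (Qp k) := by
  rw [Qp_der, Qp, Finset.sum_antidiagonal_choose_succ_mul (fun i j => (X ^ i * Sp j : ℤ[X])),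
    add_comm]
  congr 1
  rw [Qp, Finset.mul_sum]
  apply Finset.sum_congr rfl
  rintro ⟨i, j⟩ hij
  rw [Finset.HasAntidiagonal.mem_antidiagonal] at hij
  simp only at hij ⊢
  rw [← Nat.choose_symm_of_eq_add hij.symm]
  ring

/-- The coefficients of the theorem. -/
noncomputable def cc (k l : ℕ) : ℕ :=
  ∑ m₁ ∈ Finset.range (l + 1), k.choose m₁ *
    ∑ m₂ ∈ Finset.Icc (l - m₁) ((k - m₁) / 2), m₂.choose (l - m₁) * p2 (k - m₁) m₂

theorem Qp_coeff (k l : ℕ) : (Qp k).coeff l = (cc k l : ℤ) := by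
  have hin : ∀ m, ((∑ m₂ ∈ Finset.Icc (l - m) ((k - m) / 2),
      m₂.choose (l - m) * p2 (k - m) m₂ : ℕ) : ℤ) = (Sp (k - m)).coeff (l - m) := by
    intro m
    rw [Sp_coeff]
    push_cast
    have hsub : Finset.Icc (l - m) ((k - m) / 2) ⊆ range (k - m + 1) := by
      intro x hx
      rw [Finset.mem_Icc] at hx
      rw [Finset.mem_range]
      omega
    rw [Finset.sum_congr rfl (fun x _ => by rw [p2_eq, mul_comm]), Finset.sum_subset hsub]
    intro x _ hx
    rw [Finset.mem_Icc, not_and_or] at hx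
    rcases hx with hx | hx
    · rw [Nat.choose_eq_zero_of_lt (by omega)]; simp
    · rw [rr_eq_zero (k - m) x (by omega)]; simp
  rw [Qp, Finset.Nat.sum_antidiagonal_eq_sum_range_succ_mk, finsetSum_coeff, cc]
  push_cast [← hin]
  have e1 : ∀ m ∈ range (k + 1), ((k.choose m : ℤ[X]) * (X ^ m * Sp (k - m))).coeff l =
      (k.choose m : ℤ) * if m ≤ l then (Sp (k - m)).coeff (l - m) else 0 := by
    intro m _
    rw [coeff_natCast_mul, coeff_X_pow_mul']
  have e2 : ∀ m ∈ range (l + 1), (k.choose m : ℤ) * (∑ m₂ ∈ Finset.Icc (l - m) ((k - m) / 2),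
      (m₂.choose (l - m) : ℤ) * (p2 (k - m) m₂ : ℤ)) =
      (k.choose m : ℤ) * if m ≤ l then (Sp (k - m)).coeff (l - m) else 0 := by
    intro m hm
    rw [Finset.mem_range] at hm
    rw [if_pos (by omega), ← hin]
    push_cast
    rfl
  rw [Finset.sum_congr rfl e1, Finset.sum_congr rfl e2]
  rw [Finset.sum_subset (s₁ := range (k + 1)) (s₂ := range (k + l + 1)),
    Finset.sum_subset (s₁ := range (l + 1)) (s₂ := range (k + l + 1))]
  · intro x hx; rw [Finset.mem_range] at *; omega
  · intro x _ hx
    rw [Finset.mem_range] at hx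
    rw [if_neg (by omega), mul_zero]
  · intro x hx; rw [Finset.mem_range] at *; omega
  · intro x _ hx
    rw [Finset.mem_range] at hx
    rw [Nat.choose_eq_zero_of_lt (by omega)]; simp

theorem cc_succ (k l : ℕ) : cc (k + 1) l =
    (if l = 0 then 0 else cc k (l - 1)) + l * cc k l + (l + 1) * cc k (l + 1) := by
  have h := congrArg (fun p => coeff p l) (Qp_succ k)
  simp only [add_mul, one_mul, coeff_add, coeff_derivative] at h
  rcases l with _ | l
  · simp only [Qp_coeff, coeff_X_mul_zero] at h
    simp
    push_cast at h
    simp at h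
    exact_mod_cast h
  · simp only [Qp_coeff, coeff_X_mul, coeff_derivative] at h
    simp only [Nat.add_sub_cancel, Nat.add_eq_zero_iff, one_ne_zero, and_false, if_false]
    zify
    rw [h]
    push_cast
    ring

theorem cc_zero (l : ℕ) : cc 0 l = if l = 0 then 1 else 0 := by
  have h := Qp_coeff 0 l
  rw [Qp] at h
  simp [Sp, Pp, coeff_one] at h
  split_ifs at h ⊢ <;> omega

theorem cc_eq_zero (k : ℕ) : ∀ l, k < l → cc k l = 0 := by
  induction k with
  | zero => intro l hl; rw [cc_zero, if_neg (by omega)]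
  | succ k ih =>
    intro l hl
    rw [cc_succ, if_neg (by omega), ih _ (by omega), ih _ (by omega), ih _ (by omega)]
    simp

end Coeffs

/-! ### The main induction -/

theorem rowDiagram_rowLen_zero (n : ℕ) : (rowDiagram n).rowLen 0 = n := by
  apply rowLen_eq_of
  intro j
  rw [rowDiagram, YoungDiagram.mem_ofRowLens]
  simp

theorem truncate_rowDiagram (n : ℕ) : truncate (rowDiagram n) = ⊥ := by
  apply yd_ext
  rintro ⟨i, j⟩
  rw [mem_truncate, rowDiagram, YoungDiagram.mem_ofRowLens]
  simp

theorem rowDiagram_eq_iff (n : ℕ) (lam : YoungDiagram) (h : lam.card = n) :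
    rowDiagram n = lam ↔ (truncate lam).card = 0 := by
  have h1 := card_trunc lam
  rw [eq_iff_trunc, truncate_rowDiagram, rowDiagram_rowLen_zero]
  constructor
  · rintro ⟨h2, _⟩
    rw [← h2, card_bot]
  · intro h2
    exact ⟨(eq_bot_of_card h2).symm, by omega⟩

theorem main_count (m k : ℕ) : ∀ lam : YoungDiagram, lam.card = m + 1 →
    k + lam.rowLen 1 ≤ m + 1 →
    Nat.card (KroneckerTableau k (rowDiagram (m + 1)) lam) =
      fSYT (truncate lam) * cc k (truncate lam).card := by
  induction k with
  | zero =>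
    intro lam hl _
    rw [KT_zero_card, cc_zero]
    by_cases h : (truncate lam).card = 0
    · rw [if_pos ((rowDiagram_eq_iff _ _ hl).2 h), if_pos h, eq_bot_of_card h, fSYT_bot]
    · rw [if_neg (fun e => h ((rowDiagram_eq_iff _ _ hl).1 e)), if_neg h, mul_zero]
  | succ k ih =>
    intro lam hl hs
    have h0 := KT_succ_card (k := k) (μ := rowDiagram (m + 1)) hl
    have hlam := ih lam hl (by omega)
    have hct := card_trunc lam
    have hin : ∀ ν ∈ Dn lam m,
        ∑ μ' ∈ Upp ν (m + 1), Nat.card (KroneckerTableau k (rowDiagram (m + 1)) μ') =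
        fSYT (truncate ν) *
          (fun j => cc k j + (j + 1) * cc k (j + 1)) (truncate ν).card := by
      intro ν hν
      rw [mem_Dn] at hν
      obtain ⟨hν1, hν2⟩ := hν
      have hr := (le_iff_rowLen.1 hν2) 1
      have hcν := card_trunc ν
      have hcong : ∀ μ' ∈ Upp ν (m + 1),
          Nat.card (KroneckerTableau k (rowDiagram (m + 1)) μ') =
          fSYT (truncate μ') * cc k (truncate μ').card := by
        intro μ' hμ'
        rw [mem_Upp] at hμ'
        have := rowLen_cover hμ'.2 (by omega) 1
        exact ih μ' hμ'.1 (by omega)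
      rw [Finset.sum_congr rfl hcong]
      exact sum_Upp_trunc hν1 rfl (cc k) (fun e => cc_eq_zero k _ (by omega))
    have hout := sum_Dn_trunc hl rfl (fun j => cc k j + (j + 1) * cc k (j + 1)) (by
      intro e
      rw [cc_eq_zero k _ (by omega), cc_eq_zero k _ (by omega)]
      simp)
    rw [Finset.sum_congr rfl hin, hout, hlam] at h0
    rw [cc_succ]
    generalize (truncate lam).card = l at *
    rcases l with _ | l
    · simp at h0 ⊢
      linarith
    · simp only [Nat.add_sub_cancel, Nat.add_eq_zero_iff, one_ne_zero, and_false, if_false] at h0 ⊢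
      push_cast at h0 ⊢
      linarith

/-- Proposition 3.3: for `n ≥ k + λ₂` and `ℓ = n - λ₁`, the number of Kronecker tableaux of
length `k`, initial shape `(n)` and final shape `λ` is
`f^{λ̄} ⬝ Σ_{m₁=0}^{ℓ} C(k, m₁) Σ_{m₂=ℓ-m₁}^{⌊(k-m₁)/2⌋} C(m₂, ℓ-m₁) p₂(k-m₁, m₂)`. -/
theorem statement3 (n k ℓ : ℕ) (hn : 1 ≤ n) (hk : 1 ≤ k) (lam : YoungDiagram)
    (hcard : lam.card = n) (hstable : k + lam.rowLen 1 ≤ n) (hℓ : ℓ = n - lam.rowLen 0) :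
    Nat.card (KroneckerTableau k (rowDiagram n) lam) =
      fSYT (truncate lam) *
        ∑ m₁ ∈ Finset.range (ℓ + 1), k.choose m₁ *
          ∑ m₂ ∈ Finset.Icc (ℓ - m₁) ((k - m₁) / 2),
            m₂.choose (ℓ - m₁) * p2 (k - m₁) m₂ := by
  obtain ⟨m, rfl⟩ : ∃ m, n = m + 1 := ⟨n - 1, by omega⟩
  have h := main_count m k lam hcard hstable
  have hct := card_trunc lam
  have he : (truncate lam).card = ℓ := by omega
  rw [he] at h
  exact h

end KroneckerPaper
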